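/- For every ε > 0 there exists δ₀ = δ₀(ε) such that the following holds for all δ ≥ δ₀: let G = (V,E) be a finite simple graph with weighted lists of colours (L,μ). If for every edge e ∈ E we have (a) μ(e,c) ∈ [exp(−δ^{1/25}), δ^{−1}] for every c ∈ L(e), (b) |L(e)|_μ ≥ 1+ε, and (c) for every vertex v ∈ V and colour c ∈ ℕ, Σ_{e ∼ v, c ∈ L(e)} μ(e,c) ≤ 1, then there is an L-edge-colouring of G. -/

import Mathlib

/-- An `L`-edge-colouring of a simple graph `G`. -/
def IsLEdgeColouring {V : Type} (G : SimpleGraph V) (L : Sym2 V → Finset ℕ)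
    (γ : Sym2 V → ℕ) : Prop :=
  (∀ e ∈ G.edgeSet, γ e ∈ L e) ∧
  ∀ e ∈ G.edgeSet, ∀ f ∈ G.edgeSet, e ≠ f → (∃ v, v ∈ e ∧ v ∈ f) → γ e ≠ γ f

/-!
The colouring is built by a nibble on the edges. In one round every colour `c` of an edge `e` is
activated by an independent coin of bias `θ * μ e c`. The edge `e` receives an activated colour if
no adjacent edge activated it, and a colour activated at `e` or next to `e` leaves the list of `e`.
Dividing the surviving weights by their survival probability keeps the expected list weights from
dropping. The weight of a colour at a vertex shrinks by a constant factor in expectation, because an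
edge whose list has weight `1 + ε` is coloured more often than the rescaling makes up for. As all
weights are tiny, both quantities are concentrated, and since they depend on few coins the local
lemma gives an outcome in which all of them are close to their means. After boundedly many rounds
the list weights are still at least `1` while every colour has weight at most `1 / 32` at every
vertex. Choosing a colour for each remaining edge at random, proportionally to its weights, then
succeeds by the local lemma.
-/

namespace EdgeNibble

open MeasureTheory ProbabilityTheory Finset
open scoped Classical

section Independence

variable {I : Type*} {X : I → Type*}

theorem dependsOn_mem_biInter {B : Type*} {A : B → Set (∀ i, X i)} {S : B → Set I}
    (h : ∀ b, DependsOn (· ∈ A b) (S b)) (T : Finset B) :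
    DependsOn (· ∈ ⋂ b ∈ T, A b) (⋃ b ∈ T, S b) := fun x y hxy ↦ by
  simp only [Set.mem_iInter]
  exact propext (forall₂_congr fun b hb ↦ (h b fun i hi ↦ hxy i (Set.mem_biUnion hb hi)).to_iff)

variable [Fintype I] [∀ i, Countable (X i)]
  [∀ i, MeasurableSpace (X i)] [∀ i, DiscreteMeasurableSpace (X i)]
  (P : ∀ i, Measure (X i)) [∀ i, IsProbabilityMeasure (P i)]

theorem indepFun_of_dependsOn_disjoint {β γ : Type*} [MeasurableSpace β] [MeasurableSpace γ]
    {f : (∀ i, X i) → β} {g : (∀ i, X i) → γ} {S T : Set I} (hf : DependsOn f S)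
    (hg : DependsOn g T) (hST : Disjoint S T) : IndepFun f g (Measure.pi P) := by
  have hne : Nonempty (∀ i, X i) := nonempty_of_isProbabilityMeasure (Measure.pi P)
  have := hne.map f
  have := hne.map g
  rw [← Set.coe_toFinset S, dependsOn_iff_exists_comp] at hf
  rw [← Set.coe_toFinset T, dependsOn_iff_exists_comp] at hg
  obtain ⟨F, rfl⟩ := hf
  obtain ⟨G, rfl⟩ := hg
  have hcoord : iIndepFun (fun i (ω : ∀ i, X i) ↦ ω i) (Measure.pi P) :=
    iIndepFun_pi (X := fun _ x ↦ x) fun _ ↦ aemeasurable_id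
  exact (hcoord.indepFun_finset S.toFinset T.toFinset (by simpa using hST)
    (fun i ↦ measurable_pi_apply i)).comp (measurable_of_countable F) (measurable_of_countable G)

theorem measure_inter_of_dependsOn_disjoint {A B : Set (∀ i, X i)} {S T : Set I}
    (hA : DependsOn (· ∈ A) S) (hB : DependsOn (· ∈ B) T) (hST : Disjoint S T) :
    Measure.pi P (A ∩ B) = Measure.pi P A * Measure.pi P B := by
  have hpre (D : Set (∀ i, X i)) : (· ∈ D) ⁻¹' {True} = D := by ext ω; simp
  simpa only [hpre] using (indepFun_of_dependsOn_disjoint P hA hB hST).measure_inter_preimage_eq_mul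
    _ _ (MeasurableSet.singleton True) (MeasurableSet.singleton True)

theorem iIndepFun_of_dependsOn_pairwise_disjoint {J : Type*} {β : J → Type*}
    [∀ j, MeasurableSpace (β j)] {f : ∀ j, (∀ i, X i) → β j} {S : J → Set I}
    (hf : ∀ j, DependsOn (f j) (S j)) (hS : Pairwise (Function.onFun Disjoint S)) :
    iIndepFun f (Measure.pi P) := by
  refine iIndepFun_iff_measure_inter_preimage_eq_mul.2 fun T B hB ↦ ?_
  have hpre (j : J) : DependsOn (· ∈ f j ⁻¹' B j) (S j) := fun x y hxy ↦ by
    simp only [Set.mem_preimage, hf j hxy]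
  induction T using Finset.induction_on with
  | empty => simp
  | insert j T hj ih =>
    have hdisj : Disjoint (S j) (⋃ k ∈ T, S k) :=
      Set.disjoint_iUnion₂_right.2 fun k hk ↦ hS fun hjk ↦ hj (hjk ▸ hk)
    rw [Finset.set_biInter_insert, prod_insert hj, ← ih fun k hk ↦ hB k (mem_insert_of_mem hk)]
    exact measure_inter_of_dependsOn_disjoint P (hpre j) (dependsOn_mem_biInter hpre T) hdisj

end Independence

section LocalLemma

/-- The event that none of the events `A b`, `b ∈ T`, occurs. -/
def avoid {Ω ι : Type*} (A : ι → Set Ω) (T : Finset ι) : Set Ω :=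
  ⋂ b ∈ T, (A b)ᶜ

variable {Ω ι : Type*} {A : ι → Set Ω}

theorem mem_avoid {T : Finset ι} {ω : Ω} : ω ∈ avoid A T ↔ ∀ b ∈ T, ω ∉ A b := by
  simp [avoid]

theorem avoid_insert (b : ι) (T : Finset ι) : avoid A (insert b T) = avoid A T \ A b := by
  ext ω; simp [mem_avoid, and_comm]

theorem avoid_anti {S T : Finset ι} (h : S ⊆ T) : avoid A T ⊆ avoid A S :=
  Set.biInter_subset_biInter_left h

variable [MeasurableSpace Ω] (P : Measure Ω) [IsProbabilityMeasure P]

theorem measureReal_avoid_insert (b : ι) (T : Finset ι) (hA : MeasurableSet (A b)) :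
    P.real (avoid A (insert b T)) = P.real (avoid A T) - P.real (A b ∩ avoid A T) := by
  rw [avoid_insert, ← measureReal_inter_add_sdiff (μ := P) (s := avoid A T) hA, Set.inter_comm]
  ring

theorem prod_one_sub_mul_le_measureReal_avoid_union {x : ι → ℝ} (hx : ∀ b, x b ≤ 1)
    (hA : ∀ b, MeasurableSet (A b)) {S T : Finset ι} (hST : Disjoint S T)
    (h : ∀ b ∈ S, ∀ U ⊆ S ∪ T, b ∉ U → P.real (A b ∩ avoid A U) ≤ x b * P.real (avoid A U)) :
    (∏ b ∈ S, (1 - x b)) * P.real (avoid A T) ≤ P.real (avoid A (S ∪ T)) := by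
  induction S using Finset.induction_on with
  | empty => simp
  | insert s S hs ih =>
    rw [disjoint_insert_left] at hST
    rw [insert_union] at h
    have hS := ih hST.2 fun b hb U hU ↦
      h b (mem_insert_of_mem hb) U (hU.trans (subset_insert _ _))
    have hs' := h s (mem_insert_self _ _) (S ∪ T) (subset_insert _ _)
      (by simp [hs, hST.1])
    rw [prod_insert hs, insert_union, measureReal_avoid_insert P s _ (hA s)]
    calc (1 - x s) * (∏ b ∈ S, (1 - x b)) * P.real (avoid A T)
        = (1 - x s) * ((∏ b ∈ S, (1 - x b)) * P.real (avoid A T)) := mul_assoc ..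
      _ ≤ (1 - x s) * P.real (avoid A (S ∪ T)) :=
        mul_le_mul_of_nonneg_left hS (sub_nonneg.2 (hx s))
      _ ≤ _ := by linarith

variable {x : ι → ℝ} {Γ : ι → Finset ι}

theorem measureReal_inter_avoid_le (hx₀ : ∀ b, 0 ≤ x b) (hx₁ : ∀ b, x b ≤ 1)
    (hA : ∀ b, MeasurableSet (A b))
    (hdep : ∀ b T, b ∉ T → Disjoint T (Γ b) →
      P.real (A b ∩ avoid A T) ≤ x b * (∏ c ∈ Γ b, (1 - x c)) * P.real (avoid A T))
    (T : Finset ι) : ∀ b ∉ T, P.real (A b ∩ avoid A T) ≤ x b * P.real (avoid A T) := by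
  induction T using Finset.strongInduction with
  | H T ih =>
  intro b hb
  have hsplit : T ∩ Γ b ∪ T \ Γ b = T := by rw [union_comm, sdiff_union_inter]
  have hprod : ∏ c ∈ Γ b, (1 - x c) ≤ ∏ c ∈ T ∩ Γ b, (1 - x c) :=
    Finset.prod_le_prod_of_subset_of_le_one inter_subset_right (fun c _ ↦ sub_nonneg.2 (hx₁ c))
      fun c _ _ ↦ sub_le_self 1 (hx₀ c)
  have hunion := prod_one_sub_mul_le_measureReal_avoid_union P hx₁ hA
    (disjoint_sdiff_inter T (Γ b)).symm fun c hc U hU hcU ↦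
      ih U ((hsplit ▸ hU).ssubset_of_ne fun h ↦ hcU (h ▸ inter_subset_left hc)) c hcU
  rw [hsplit] at hunion
  calc P.real (A b ∩ avoid A T)
      ≤ P.real (A b ∩ avoid A (T \ Γ b)) :=
        measureReal_mono (Set.inter_subset_inter_right _ (avoid_anti sdiff_subset))
    _ ≤ x b * (∏ c ∈ Γ b, (1 - x c)) * P.real (avoid A (T \ Γ b)) :=
        hdep b _ (fun h ↦ hb (sdiff_subset h)) sdiff_disjoint
    _ ≤ x b * ((∏ c ∈ T ∩ Γ b, (1 - x c)) * P.real (avoid A (T \ Γ b))) := by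
        rw [mul_assoc]
        have := hx₀ b
        gcongr
    _ ≤ x b * P.real (avoid A T) := mul_le_mul_of_nonneg_left hunion (hx₀ b)

theorem prod_one_sub_le_measureReal_avoid (hx₀ : ∀ b, 0 ≤ x b) (hx₁ : ∀ b, x b ≤ 1)
    (hA : ∀ b, MeasurableSet (A b))
    (hdep : ∀ b T, b ∉ T → Disjoint T (Γ b) →
      P.real (A b ∩ avoid A T) ≤ x b * (∏ c ∈ Γ b, (1 - x c)) * P.real (avoid A T))
    (S : Finset ι) : ∏ b ∈ S, (1 - x b) ≤ P.real (avoid A S) := by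
  simpa [avoid] using prod_one_sub_mul_le_measureReal_avoid_union P hx₁ hA (T := ∅)
    (disjoint_empty_right S) fun b _ U _ hbU ↦
      measureReal_inter_avoid_le P hx₀ hx₁ hA hdep U b hbU

end LocalLemma

section VariableLocalLemma

theorem one_sub_sum_le_prod_one_sub {ι : Type*} (s : Finset ι) {x : ι → ℝ}
    (h₀ : ∀ i ∈ s, 0 ≤ x i) (h₁ : ∀ i ∈ s, x i ≤ 1) :
    1 - ∑ i ∈ s, x i ≤ ∏ i ∈ s, (1 - x i) := by
  induction s using Finset.induction_on with
  | empty => simp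
  | insert a s ha ih =>
    simp only [forall_mem_insert] at h₀ h₁
    have hprod : ∏ i ∈ s, (1 - x i) ≤ 1 :=
      prod_le_one (fun i hi ↦ sub_nonneg.2 (h₁.2 i hi)) fun i hi ↦ sub_le_self 1 (h₀.2 i hi)
    rw [sum_insert ha, prod_insert ha]
    nlinarith [ih h₀.2 h₁.2, mul_le_mul_of_nonneg_left hprod h₀.1]

variable {I : Type*} {X : I → Type*} [Fintype I] [∀ i, Countable (X i)]
  [∀ i, MeasurableSpace (X i)] (P : ∀ i, Measure (X i)) [∀ i, IsProbabilityMeasure (P i)]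

theorem exists_mem_forall_measure_singleton_ne_zero {S : Set (∀ i, X i)}
    (hS : Measure.pi P S ≠ 0) : ∃ ω ∈ S, ∀ i, P i {ω i} ≠ 0 := by
  contrapose! hS
  rw [← Set.biUnion_of_singleton S, measure_biUnion_null_iff S.to_countable]
  intro ω hω
  obtain ⟨i, hi⟩ := hS ω hω
  rw [Measure.pi_singleton, prod_eq_zero (mem_univ i) hi]

variable [∀ i, DiscreteMeasurableSpace (X i)] {B : Type*} {A : B → Set (∀ i, X i)}

theorem measureReal_inter_avoid_of_disjoint {S : B → Set I} (hS : ∀ b, DependsOn (· ∈ A b) (S b))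
    {b : B} {T : Finset B} (hT : ∀ c ∈ T, Disjoint (S b) (S c)) :
    (Measure.pi P).real (A b ∩ avoid A T) =
      (Measure.pi P).real (A b) * (Measure.pi P).real (avoid A T) := by
  have hcompl (c : B) : DependsOn (· ∈ (A c)ᶜ) (S c) :=
    fun x y hxy ↦ congrArg Not (hS c hxy)
  rw [measureReal_def, avoid, measure_inter_of_dependsOn_disjoint P (hS b)
    (dependsOn_mem_biInter hcompl T) (Set.disjoint_iUnion₂_right.2 hT), ENNReal.toReal_mul]
  rfl

theorem measureReal_avoid_of_pairwise_disjoint {S : B → Set I}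
    (hS : ∀ b, DependsOn (· ∈ A b) (S b)) (hdisj : Pairwise (Function.onFun Disjoint S))
    (T : Finset B) :
    (Measure.pi P).real (avoid A T) = ∏ b ∈ T, (1 - (Measure.pi P).real (A b)) := by
  induction T using Finset.induction_on with
  | empty => simp [avoid]
  | insert b T hb ih =>
    rw [measureReal_avoid_insert _ _ _ .of_discrete, prod_insert hb, ← ih,
      measureReal_inter_avoid_of_disjoint P hS fun c hc ↦
        hdisj (ne_of_mem_of_not_mem hc hb).symm]
    ring

variable {vars : B → Finset I} [Fintype B]

theorem exists_forall_notMem_of_sum_le (hvars : ∀ b, DependsOn (· ∈ A b) (vars b : Set I))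
    (hA : ∀ b, (Measure.pi P).real (A b) ≤ 1 / 4)
    (hsum : ∀ b, ∑ c with ¬ Disjoint (vars b) (vars c), (Measure.pi P).real (A c) ≤ 1 / 4) :
    ∃ ω, (∀ b, ω ∉ A b) ∧ ∀ i, P i {ω i} ≠ 0 := by
  set Q := Measure.pi P
  set x : B → ℝ := fun b ↦ 2 * Q.real (A b)
  have hx₀ (b) : 0 ≤ x b := by positivity
  have hx₁ (b) : x b ≤ 1 / 2 := by linarith [hA b]
  have hdep (b : B) (T : Finset B)
      (hT : Disjoint T ({c | ¬ Disjoint (vars b) (vars c)} : Finset B)) :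
      Q.real (A b ∩ avoid A T) ≤
        x b * (∏ c with ¬ Disjoint (vars b) (vars c), (1 - x c)) * Q.real (avoid A T) := by
    have hprod : 1 / 2 ≤ ∏ c with ¬ Disjoint (vars b) (vars c), (1 - x c) := by
      refine le_trans ?_ (one_sub_sum_le_prod_one_sub _ (fun c _ ↦ hx₀ c)
        fun c _ ↦ (hx₁ c).trans (by norm_num))
      rw [← mul_sum]
      linarith [hsum b]
    rw [measureReal_inter_avoid_of_disjoint P hvars fun c hc ↦ by
      simpa using disjoint_left.1 hT hc]
    gcongr
    linarith [mul_le_mul_of_nonneg_left hprod (hx₀ b)]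
  have hpos : 0 < Q.real (avoid A univ) :=
    (prod_pos fun b _ ↦ by linarith [hx₁ b]).trans_le
      (prod_one_sub_le_measureReal_avoid Q hx₀ (fun b ↦ (hx₁ b).trans (by norm_num))
        (fun b ↦ .of_discrete) (fun b T _ ↦ hdep b T) univ)
  obtain ⟨ω, hω, hω'⟩ := exists_mem_forall_measure_singleton_ne_zero P
    (measureReal_ne_zero_iff (μ := Q) |>.1 hpos.ne')
  exact ⟨ω, fun b ↦ mem_avoid.1 hω b (mem_univ b), hω'⟩

theorem exists_forall_notMem_of_card_le (hvars : ∀ b, DependsOn (· ∈ A b) (vars b : Set I))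
    {p : ℝ} {s k : ℕ} (hA : ∀ b, (Measure.pi P).real (A b) ≤ p) (hp : p ≤ 1 / 4)
    (hs : ∀ b, #(vars b) ≤ s) (hk : ∀ i, #{b | i ∈ vars b} ≤ k) (hskp : s * k * p ≤ 1 / 4) :
    ∃ ω, ∀ b, ω ∉ A b := by
  obtain ⟨ω, hω, -⟩ := exists_forall_notMem_of_sum_le P hvars (fun b ↦ (hA b).trans hp) fun b ↦ by
    have hcard : #{c | ¬ Disjoint (vars b) (vars c)} ≤ s * k := calc
      _ ≤ #((vars b).biUnion fun i ↦ {c | i ∈ vars c}) := card_le_card fun c hc ↦ by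
        simpa [not_disjoint_iff] using hc
      _ ≤ #(vars b) * k := card_biUnion_le_card_mul _ _ _ fun i _ ↦ hk i
      _ ≤ s * k := Nat.mul_le_mul_right k (hs b)
    have hp₀ : 0 ≤ p := measureReal_nonneg.trans (hA b)
    calc ∑ c with ¬ Disjoint (vars b) (vars c), (Measure.pi P).real (A c)
        ≤ #{c | ¬ Disjoint (vars b) (vars c)} * p := by
          simpa using sum_le_card_nsmul _ _ p fun c _ ↦ hA c
      _ ≤ s * k * p := mul_le_mul_of_nonneg_right (mod_cast hcard) hp₀
      _ ≤ 1 / 4 := hskp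
  exact ⟨ω, hω⟩

end VariableLocalLemma

section Concentration

theorem exp_neg_mul_le_one_add {t M z : ℝ} (htM : |t| * M ≤ 1) (hz : z ∈ Set.Icc 0 M) :
    Real.exp (-(t * z)) ≤ 1 + (t ^ 2 * M - t) * z := by
  have habs : |-(t * z)| ≤ 1 := by
    rw [abs_neg, abs_mul, abs_of_nonneg hz.1]
    exact (mul_le_mul_of_nonneg_left hz.2 (abs_nonneg t)).trans htM
  have hexp := (abs_le.1 (Real.abs_exp_sub_one_sub_id_le habs)).2
  have hsq : t ^ 2 * z * z ≤ t ^ 2 * z * M :=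
    mul_le_mul_of_nonneg_left hz.2 (mul_nonneg (sq_nonneg t) hz.1)
  nlinarith

theorem sum_mul_mem_Icc {ι : Type*} {s : Finset ι} {a u : ι → ℝ} (ha : ∀ i, 0 ≤ a i)
    (hu : ∀ i, u i ∈ Set.Icc 0 1) : ∑ i ∈ s, a i * u i ∈ Set.Icc 0 (∑ i ∈ s, a i) :=
  ⟨sum_nonneg fun i _ ↦ mul_nonneg (ha i) (hu i).1,
    sum_le_sum fun i _ ↦ mul_le_of_le_one_right (ha i) (hu i).2⟩

theorem prod_one_sub_mem_Icc {ι : Type*} {s : Finset ι} {u : ι → ℝ}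
    (hu : ∀ i, u i ∈ Set.Icc 0 1) : ∏ i ∈ s, (1 - u i) ∈ Set.Icc 0 1 :=
  ⟨prod_nonneg fun i _ ↦ sub_nonneg.2 (hu i).2,
    prod_le_one (fun i _ ↦ sub_nonneg.2 (hu i).2) fun i _ ↦ sub_le_self 1 (hu i).1⟩

section Pointwise

variable {ι : Type*} {s : Finset ι} {a u v : ι → ℝ} {t M : ℝ}

theorem exp_mul_sum_mul_one_sub_le (ha : ∀ i, 0 ≤ a i) (hu : ∀ i, u i ∈ Set.Icc 0 1)
    (hv : ∀ i, 0 ≤ v i) (hM : ∑ i ∈ s, a i * v i ≤ M) (htM : |t| * M ≤ 1) :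
    Real.exp (t * ∑ i ∈ s, a i * (u i * (1 - v i))) ≤ Real.exp (t * ∑ i ∈ s, a i * u i) *
      (1 + ∑ i ∈ s, (t ^ 2 * M - t) * a i * (u i * v i)) := by
  have hz : ∑ i ∈ s, a i * (u i * v i) ∈ Set.Icc 0 M :=
    ⟨sum_nonneg fun i _ ↦ mul_nonneg (ha i) (mul_nonneg (hu i).1 (hv i)),
      (sum_le_sum fun i _ ↦ mul_le_mul_of_nonneg_left
        (mul_le_of_le_one_left (hv i) (hu i).2) (ha i)).trans hM⟩
  have hsplit : t * ∑ i ∈ s, a i * (u i * (1 - v i)) =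
      t * ∑ i ∈ s, a i * u i + -(t * ∑ i ∈ s, a i * (u i * v i)) := by
    rw [← sub_eq_add_neg, ← mul_sub, ← sum_sub_distrib]
    exact congrArg _ (sum_congr rfl fun i _ ↦ by ring)
  simp only [mul_assoc, ← mul_sum]
  rw [hsplit, Real.exp_add]
  gcongr
  exact exp_neg_mul_le_one_add htM hz

theorem exp_mul_one_add_sum_le (ha : ∀ i, 0 ≤ a i) (hu : ∀ i, u i ≤ 1) (hv : ∀ i, 0 ≤ v i)
    (hM : 0 ≤ M) :
    Real.exp (t * ∑ i ∈ s, a i * u i) * (1 + ∑ i ∈ s, (t ^ 2 * M - t) * a i * (u i * v i)) ≤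
      Real.exp (t ^ 2 * M * ∑ i ∈ s, a i * v i) *
        Real.exp (t * ∑ i ∈ s, a i * (1 - v i) * u i) := by
  have huv : ∑ i ∈ s, a i * (u i * v i) ≤ ∑ i ∈ s, a i * v i :=
    sum_le_sum fun i _ ↦ mul_le_mul_of_nonneg_left (mul_le_of_le_one_left (hv i) (hu i)) (ha i)
  have hsplit : t * ∑ i ∈ s, a i * (1 - v i) * u i =
      t * ∑ i ∈ s, a i * u i - t * ∑ i ∈ s, a i * (u i * v i) := by
    rw [← mul_sub, ← sum_sub_distrib]
    exact congrArg _ (sum_congr rfl fun i _ ↦ by ring)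
  simp only [mul_assoc, ← mul_sum] at hsplit ⊢
  rw [hsplit, ← Real.exp_add]
  calc _ ≤ Real.exp (t * ∑ i ∈ s, a i * u i) *
        Real.exp ((t ^ 2 * M - t) * ∑ i ∈ s, a i * (u i * v i)) := by
        gcongr
        linarith [Real.add_one_le_exp ((t ^ 2 * M - t) * ∑ i ∈ s, a i * (u i * v i))]
    _ ≤ _ := by
        rw [← Real.exp_add]
        exact Real.exp_le_exp.2
          (by linarith [mul_le_mul_of_nonneg_left huv (mul_nonneg (sq_nonneg t) hM)])

end Pointwise

variable {Ω ι : Type*} [MeasurableSpace Ω] {P : Measure Ω} {s : Finset ι} {a : ι → ℝ} {t M : ℝ}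

theorem integrable_mul_of_mem_Icc {f u : Ω → ℝ} (hf : Integrable f P) (hu : Measurable u)
    (hu₁ : ∀ ω, u ω ∈ Set.Icc 0 1) : Integrable (fun ω ↦ f ω * u ω) P :=
  hf.mul_bdd (c := 1) hu.aestronglyMeasurable (.of_forall fun ω ↦ by
    simpa [abs_of_nonneg (hu₁ ω).1] using (hu₁ ω).2)

theorem integrable_mul_one_add_sum {f : Ω → ℝ} (hf : Integrable f P) {U V : Ω → ι → ℝ}
    (hU : Measurable U) (hV : Measurable V) (hU₁ : ∀ ω i, U ω i ∈ Set.Icc 0 1)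
    (hV₁ : ∀ ω i, V ω i ∈ Set.Icc 0 1) (b : ι → ℝ) :
    Integrable (fun ω ↦ f ω * (1 + ∑ i ∈ s, b i * (U ω i * V ω i))) P := by
  simp only [mul_add, mul_one, mul_sum]
  refine hf.add (integrable_finsetSum s fun i _ ↦ ?_)
  simp only [mul_left_comm _ (b i), ← mul_assoc (f _)]
  exact (integrable_mul_of_mem_Icc (integrable_mul_of_mem_Icc hf (by fun_prop) (hU₁ · i))
    (by fun_prop) (hV₁ · i)).const_mul _

theorem integral_comp_mul_one_add_sum {U V : Ω → ι → ℝ} (hUV : IndepFun U V P)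
    (hU : Measurable U) (hV : Measurable V) (hU₁ : ∀ ω i, U ω i ∈ Set.Icc 0 1)
    (hV₁ : ∀ ω i, V ω i ∈ Set.Icc 0 1) {g : (ι → ℝ) → ℝ} (hg : Measurable g)
    (hgU : Integrable (fun ω ↦ g (U ω)) P) (b : ι → ℝ) :
    ∫ ω, g (U ω) * (1 + ∑ i ∈ s, b i * (U ω i * V ω i)) ∂P =
      ∫ ω, g (U ω) * (1 + ∑ i ∈ s, b i * (U ω i * (∫ ω, V ω i ∂P))) ∂P := by
  have hintU (i : ι) : Integrable (fun ω ↦ g (U ω) * U ω i) P :=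
    integrable_mul_of_mem_Icc hgU (by fun_prop) (hU₁ · i)
  have hintV (i : ι) : Integrable (fun ω ↦ g (U ω) * U ω i * V ω i) P :=
    integrable_mul_of_mem_Icc (hintU i) (by fun_prop) (hV₁ · i)
  have hexpand (v : Ω → ι → ℝ) (ω : Ω) : g (U ω) * (1 + ∑ i ∈ s, b i * (U ω i * v ω i)) =
      g (U ω) + ∑ i ∈ s, b i * (g (U ω) * U ω i * v ω i) := by
    rw [mul_add, mul_one, mul_sum]
    exact congrArg _ (sum_congr rfl fun i _ ↦ by ring)
  have hfactor (i : ι) : ∫ ω, g (U ω) * U ω i * V ω i ∂P =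
      (∫ ω, g (U ω) * U ω i ∂P) * ∫ ω, V ω i ∂P :=
    (hUV.comp (φ := fun u ↦ g u * u i) (ψ := fun v : ι → ℝ ↦ v i) (by fun_prop)
      (by fun_prop)).integral_fun_mul_eq_mul_integral (by fun_prop) (by fun_prop)
  simp only [hexpand V, hexpand fun _ i ↦ ∫ ω, V ω i ∂P]
  rw [integral_add hgU (integrable_finsetSum s fun i _ ↦ (hintV i).const_mul (b i)),
    integral_add hgU (integrable_finsetSum s fun i _ ↦ ((hintU i).mul_const _).const_mul (b i)),
    integral_finsetSum _ fun i _ ↦ (hintV i).const_mul _,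
    integral_finsetSum _ fun i _ ↦ ((hintU i).mul_const _).const_mul _]
  simp only [integral_const_mul, integral_mul_const, hfactor]

variable [IsProbabilityMeasure P]

theorem integral_mem_Icc {f : Ω → ℝ} (hf : Measurable f) (hf₁ : ∀ ω, f ω ∈ Set.Icc 0 1) :
    P[f] ∈ Set.Icc 0 1 := by
  refine ⟨integral_nonneg fun ω ↦ (hf₁ ω).1, ?_⟩
  simpa using integral_mono (.of_mem_Icc (μ := P) 0 1 hf.aemeasurable (.of_forall hf₁))
    (integrable_const 1) fun ω ↦ (hf₁ ω).2

theorem mgf_sum_mul_one_sub_le {U V : Ω → ι → ℝ} (hUV : IndepFun U V P)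
    (hU : Measurable U) (hV : Measurable V) (hU₁ : ∀ ω i, U ω i ∈ Set.Icc 0 1)
    (hV₁ : ∀ ω i, V ω i ∈ Set.Icc 0 1) (ha : ∀ i, 0 ≤ a i)
    (hM : ∀ ω, ∑ i ∈ s, a i * V ω i ≤ M) (htM : |t| * M ≤ 1) :
    mgf (fun ω ↦ ∑ i ∈ s, a i * (U ω i * (1 - V ω i))) P t ≤
      Real.exp (t ^ 2 * M * ∑ i ∈ s, a i * ∫ ω, V ω i ∂P) *
        mgf (fun ω ↦ ∑ i ∈ s, a i * (1 - ∫ ω, V ω i ∂P) * U ω i) P t := by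
  set v : ι → ℝ := fun i ↦ ∫ ω, V ω i ∂P
  have hv (i : ι) : v i ∈ Set.Icc 0 1 := integral_mem_Icc (by fun_prop) fun ω ↦ hV₁ ω i
  have hgU : Integrable (fun ω ↦ Real.exp (t * ∑ i ∈ s, a i * U ω i)) P :=
    integrable_exp_mul_of_mem_Icc (by fun_prop) (.of_forall fun ω ↦ sum_mul_mem_Icc ha (hU₁ ω))
  have hM₀ : 0 ≤ M := by
    obtain ⟨ω⟩ : Nonempty Ω := nonempty_of_isProbabilityMeasure P
    exact (sum_mul_mem_Icc ha (hV₁ ω)).1.trans (hM ω)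
  calc mgf (fun ω ↦ ∑ i ∈ s, a i * (U ω i * (1 - V ω i))) P t
      ≤ ∫ ω, Real.exp (t * ∑ i ∈ s, a i * U ω i) *
        (1 + ∑ i ∈ s, (t ^ 2 * M - t) * a i * (U ω i * V ω i)) ∂P :=
        integral_mono_of_nonneg (.of_forall fun ω ↦ (Real.exp_pos _).le)
          (integrable_mul_one_add_sum hgU hU hV hU₁ hV₁ _) (.of_forall fun ω ↦
            exp_mul_sum_mul_one_sub_le ha (hU₁ ω) (fun i ↦ (hV₁ ω i).1) (hM ω) htM)
    _ = ∫ ω, Real.exp (t * ∑ i ∈ s, a i * U ω i) *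
        (1 + ∑ i ∈ s, (t ^ 2 * M - t) * a i * (U ω i * v i)) ∂P :=
        integral_comp_mul_one_add_sum hUV hU hV hU₁ hV₁
          (g := fun u ↦ Real.exp (t * ∑ i ∈ s, a i * u i)) (by fun_prop) hgU _
    _ ≤ ∫ ω, Real.exp (t ^ 2 * M * ∑ i ∈ s, a i * v i) *
        Real.exp (t * ∑ i ∈ s, a i * (1 - v i) * U ω i) ∂P :=
        integral_mono (integrable_mul_one_add_sum hgU hU measurable_const hU₁ (fun _ ↦ hv) _)
          ((integrable_exp_mul_of_mem_Icc (by fun_prop) (.of_forall fun ω ↦ sum_mul_mem_Icc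
            (fun i ↦ mul_nonneg (ha i) (sub_nonneg.2 (hv i).2)) (hU₁ ω))).const_mul _)
          fun ω ↦ exp_mul_one_add_sum_le ha (fun i ↦ (hU₁ ω i).2) (fun i ↦ (hv i).1) hM₀
    _ = _ := integral_const_mul _ _

variable {J : Type*} {Y : J → Ω → ι → ℝ}

theorem mgf_sum_mul_prod_one_sub_le (hY : iIndepFun Y P) (hYm : ∀ j, Measurable (Y j))
    (hY₁ : ∀ j ω i, Y j ω i ∈ Set.Icc 0 1) (ha : ∀ i, 0 ≤ a i)
    (hM : ∀ j ω, ∑ i ∈ s, a i * Y j ω i ≤ M) (htM : |t| * M ≤ 1) (T : Finset J) :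
    mgf (fun ω ↦ ∑ i ∈ s, a i * ∏ j ∈ T, (1 - Y j ω i)) P t ≤
      Real.exp (t * ∑ i ∈ s, a i * ∏ j ∈ T, (1 - ∫ ω, Y j ω i ∂P) +
        t ^ 2 * M * ∑ i ∈ s, a i * (1 - ∏ j ∈ T, (1 - ∫ ω, Y j ω i ∂P))) := by
  induction T using Finset.induction_on generalizing a with
  | empty => simp [mgf]
  | insert k T hk ih =>
    set y : J → ι → ℝ := fun j i ↦ ∫ ω, Y j ω i ∂P
    have hy (j i) : y j i ∈ Set.Icc 0 1 := integral_mem_Icc (by fun_prop) fun ω ↦ hY₁ j ω i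
    have hindep : IndepFun (fun ω i ↦ ∏ j ∈ T, (1 - Y j ω i)) (Y k) P := by
      have heval : Measurable fun z : ({k} : Finset J) → ι → ℝ ↦ z ⟨k, mem_singleton_self k⟩ :=
        measurable_pi_apply _
      have := (hY.indepFun_finset T {k} (disjoint_singleton_right.2 hk) hYm).comp
        (φ := fun (z : T → ι → ℝ) i ↦ ∏ j ∈ T.attach, (1 - z j i))
        (by fun_prop) heval
      simpa only [Function.comp_def, fun ω i ↦ prod_attach T fun j ↦ 1 - Y j ω i] using this
    have hstep := mgf_sum_mul_one_sub_le hindep (by fun_prop) (hYm k)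
      (fun ω i ↦ prod_one_sub_mem_Icc fun j ↦ hY₁ j ω i) (hY₁ k) ha (hM k) htM
    have hIH := ih (a := fun i ↦ a i * (1 - y k i))
      (fun i ↦ mul_nonneg (ha i) (sub_nonneg.2 (hy k i).2)) fun j ω ↦
        (sum_le_sum fun i _ ↦ mul_le_mul_of_nonneg_right
          (mul_le_of_le_one_right (ha i) (sub_le_self 1 (hy k i).1)) (hY₁ j ω i).1).trans (hM j ω)
    simp only [prod_insert hk, mul_comm (1 - Y k _ _)]
    refine hstep.trans ((mul_le_mul_of_nonneg_left hIH (Real.exp_pos _).le).trans_eq ?_)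
    rw [← Real.exp_add, add_left_comm, ← mul_add, ← sum_add_distrib]
    simp only [← mul_assoc]
    refine congrArg Real.exp (congrArg₂ (· + ·) rfl (congrArg _ (sum_congr rfl fun i _ ↦ ?_)))
    ring

theorem mgf_sum_mul_prod_one_sub_le_of_abs_eq (hY : iIndepFun Y P) (hYm : ∀ j, Measurable (Y j))
    (hY₁ : ∀ j ω i, Y j ω i ∈ Set.Icc 0 1) (ha : ∀ i, 0 ≤ a i)
    (hM : ∀ j ω, ∑ i ∈ s, a i * Y j ω i ≤ M) {κ : ℝ} (hM₀ : 0 ≤ M) (hκ : κ ≤ 1)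
    (htM : |t| * M = κ) (T : Finset J) :
    mgf (fun ω ↦ ∑ i ∈ s, a i * ∏ j ∈ T, (1 - Y j ω i)) P t ≤
      Real.exp (t * ∑ i ∈ s, a i * ∏ j ∈ T, (1 - ∫ ω, Y j ω i ∂P) +
        |t| * κ * ∑ i ∈ s, a i) := by
  refine (mgf_sum_mul_prod_one_sub_le hY hYm hY₁ ha hM (htM.trans_le hκ) T).trans ?_
  have hnonneg (i : ι) : 0 ≤ ∏ j ∈ T, (1 - ∫ ω, Y j ω i ∂P) :=
    (prod_one_sub_mem_Icc fun j ↦ integral_mem_Icc (by fun_prop) fun ω ↦ hY₁ j ω i).1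
  rw [← htM, ← mul_assoc, abs_mul_abs_self, ← sq]
  gcongr with i
  exact mul_le_of_le_one_right (ha i) (sub_le_self 1 (hnonneg i))

theorem integrable_exp_mul_sum_mul_prod_one_sub (hYm : ∀ j, Measurable (Y j))
    (hY₁ : ∀ j ω i, Y j ω i ∈ Set.Icc 0 1) (ha : ∀ i, 0 ≤ a i) (T : Finset J) (t : ℝ) :
    Integrable (fun ω ↦ Real.exp (t * ∑ i ∈ s, a i * ∏ j ∈ T, (1 - Y j ω i))) P :=
  integrable_exp_mul_of_mem_Icc (by fun_prop) (.of_forall fun ω ↦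
    sum_mul_mem_Icc ha fun i ↦ prod_one_sub_mem_Icc fun j ↦ hY₁ j ω i)

theorem measureReal_le_sum_mul_prod_one_sub_le (hY : iIndepFun Y P) (hYm : ∀ j, Measurable (Y j))
    (hY₁ : ∀ j ω i, Y j ω i ∈ Set.Icc 0 1) (ha : ∀ i, 0 ≤ a i) (hM₀ : 0 < M)
    (hM : ∀ j ω, ∑ i ∈ s, a i * Y j ω i ≤ M) {κ : ℝ} (hκ₀ : 0 ≤ κ) (hκ₁ : κ ≤ 1)
    (T : Finset J) (u : ℝ) :
    P.real {ω | u ≤ ∑ i ∈ s, a i * ∏ j ∈ T, (1 - Y j ω i)} ≤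
      Real.exp (-(κ / M) *
        (u - ∑ i ∈ s, a i * ∏ j ∈ T, (1 - ∫ ω, Y j ω i ∂P) - κ * ∑ i ∈ s, a i)) := by
  have ht : 0 ≤ κ / M := by positivity
  refine (measure_ge_le_exp_mul_mgf u ht
    (integrable_exp_mul_sum_mul_prod_one_sub hYm hY₁ ha T _)).trans ?_
  refine (mul_le_mul_of_nonneg_left (mgf_sum_mul_prod_one_sub_le_of_abs_eq hY hYm hY₁ ha hM hM₀.le
    hκ₁ (by rw [abs_of_nonneg ht, div_mul_cancel₀ _ hM₀.ne']) T) (Real.exp_pos _).le).trans_eq ?_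
  rw [← Real.exp_add, abs_of_nonneg ht]
  ring_nf

theorem measureReal_sum_mul_prod_one_sub_le_le (hY : iIndepFun Y P) (hYm : ∀ j, Measurable (Y j))
    (hY₁ : ∀ j ω i, Y j ω i ∈ Set.Icc 0 1) (ha : ∀ i, 0 ≤ a i) (hM₀ : 0 < M)
    (hM : ∀ j ω, ∑ i ∈ s, a i * Y j ω i ≤ M) {κ : ℝ} (hκ₀ : 0 ≤ κ) (hκ₁ : κ ≤ 1)
    (T : Finset J) (u : ℝ) :
    P.real {ω | ∑ i ∈ s, a i * ∏ j ∈ T, (1 - Y j ω i) ≤ u} ≤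
      Real.exp (-(κ / M) *
        (∑ i ∈ s, a i * ∏ j ∈ T, (1 - ∫ ω, Y j ω i ∂P) - u - κ * ∑ i ∈ s, a i)) := by
  have ht : -(κ / M) ≤ 0 := neg_nonpos.2 (by positivity)
  refine (measure_le_le_exp_mul_mgf u ht
    (integrable_exp_mul_sum_mul_prod_one_sub hYm hY₁ ha T _)).trans ?_
  refine (mul_le_mul_of_nonneg_left (mgf_sum_mul_prod_one_sub_le_of_abs_eq hY hYm hY₁ ha hM hM₀.le
    hκ₁ (by rw [abs_of_nonpos ht, neg_neg, div_mul_cancel₀ _ hM₀.ne']) T)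
    (Real.exp_pos _).le).trans_eq ?_
  rw [← Real.exp_add, abs_of_nonpos ht]
  ring_nf

end Concentration

section EventConcentration

theorem sum_filter_mem_avoid {Ω ι J : Type*} (A : ι → J → Set Ω) (a : ι → ℝ) (s : Finset ι)
    (T : Finset J) (ω : Ω) : ∑ i ∈ s with ω ∈ avoid (A i) T, a i =
      ∑ i ∈ s, a i * ∏ j ∈ T, (1 - (A i j).indicator 1 ω) := by
  rw [sum_filter]
  refine sum_congr rfl fun i _ ↦ ?_
  split_ifs with h
  · rw [prod_eq_one fun j hj ↦ by simp [mem_avoid.1 h j hj], mul_one]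
  · simp only [mem_avoid, not_forall, not_not] at h
    obtain ⟨j, hj, hω⟩ := h
    rw [prod_eq_zero hj (by simp [hω]), mul_zero]

theorem indicator_one_mem_Icc {Ω : Type*} (A : Set Ω) (ω : Ω) :
    A.indicator (1 : Ω → ℝ) ω ∈ Set.Icc 0 1 :=
  ⟨Set.indicator_nonneg (fun _ _ ↦ zero_le_one) ω, Set.indicator_le_self' (fun _ _ ↦ zero_le_one) ω⟩

variable {I : Type*} {X : I → Type*} [Fintype I] [∀ i, Countable (X i)]
  [∀ i, MeasurableSpace (X i)] [∀ i, DiscreteMeasurableSpace (X i)]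
  (P : ∀ i, Measure (X i)) [∀ i, IsProbabilityMeasure (P i)]
  {ι J : Type*} {s : Finset ι} {a : ι → ℝ} {A : ι → J → Set (∀ i, X i)} {S : J → Set I} {M κ : ℝ}

theorem iIndepFun_indicator (hA : ∀ i j, DependsOn (· ∈ A i j) (S j))
    (hS : Pairwise (Function.onFun Disjoint S)) :
    iIndepFun (fun j ω i ↦ (A i j).indicator (1 : (∀ i, X i) → ℝ) ω) (Measure.pi P) :=
  iIndepFun_of_dependsOn_pairwise_disjoint P (fun j x y hxy ↦ funext fun i ↦ by
    simp only [Set.indicator_apply, hA i j hxy, Pi.one_apply]) hS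

theorem prod_one_sub_integral_indicator (hA : ∀ i j, DependsOn (· ∈ A i j) (S j))
    (hS : Pairwise (Function.onFun Disjoint S)) (T : Finset J) (i : ι) :
    ∏ j ∈ T, (1 - ∫ ω, (A i j).indicator (1 : (∀ i, X i) → ℝ) ω ∂Measure.pi P) =
      (Measure.pi P).real (avoid (A i) T) := by
  rw [measureReal_avoid_of_pairwise_disjoint P (hA i) hS]
  simp only [integral_indicator_one MeasurableSet.of_discrete]

theorem measureReal_le_sum_avoid_le (hA : ∀ i j, DependsOn (· ∈ A i j) (S j))
    (hS : Pairwise (Function.onFun Disjoint S)) (ha : ∀ i, 0 ≤ a i) (hM₀ : 0 < M)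
    (hM : ∀ j ω, ∑ i ∈ s with ω ∈ A i j, a i ≤ M) (hκ₀ : 0 ≤ κ) (hκ₁ : κ ≤ 1)
    (T : Finset J) (u : ℝ) :
    (Measure.pi P).real {ω | u ≤ ∑ i ∈ s with ω ∈ avoid (A i) T, a i} ≤
      Real.exp (-(κ / M) * (u - ∑ i ∈ s, a i * (Measure.pi P).real (avoid (A i) T) -
        κ * ∑ i ∈ s, a i)) := by
  simpa only [sum_filter_mem_avoid, prod_one_sub_integral_indicator P hA hS] using
    measureReal_le_sum_mul_prod_one_sub_le (iIndepFun_indicator P hA hS)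
      (fun _ ↦ measurable_of_countable _) (fun j ω i ↦ indicator_one_mem_Icc (A i j) ω) ha hM₀
      (fun j ω ↦ by simpa [Set.indicator_apply, sum_filter] using hM j ω) hκ₀ hκ₁ T u

theorem measureReal_sum_avoid_le_le (hA : ∀ i j, DependsOn (· ∈ A i j) (S j))
    (hS : Pairwise (Function.onFun Disjoint S)) (ha : ∀ i, 0 ≤ a i) (hM₀ : 0 < M)
    (hM : ∀ j ω, ∑ i ∈ s with ω ∈ A i j, a i ≤ M) (hκ₀ : 0 ≤ κ) (hκ₁ : κ ≤ 1)
    (T : Finset J) (u : ℝ) :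
    (Measure.pi P).real {ω | ∑ i ∈ s with ω ∈ avoid (A i) T, a i ≤ u} ≤
      Real.exp (-(κ / M) * (∑ i ∈ s, a i * (Measure.pi P).real (avoid (A i) T) - u -
        κ * ∑ i ∈ s, a i)) := by
  simpa only [sum_filter_mem_avoid, prod_one_sub_integral_indicator P hA hS] using
    measureReal_sum_mul_prod_one_sub_le_le (iIndepFun_indicator P hA hS)
      (fun _ ↦ measurable_of_countable _) (fun j ω i ↦ indicator_one_mem_Icc (A i j) ω) ha hM₀
      (fun j ω ↦ by simpa [Set.indicator_apply, sum_filter] using hM j ω) hκ₀ hκ₁ T u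

end EventConcentration

section ListColouring

variable {W C : Type*} [Fintype W]

theorem sum_not_disjoint_pair_le {R : W → W → ℝ} (hR₀ : ∀ e f, 0 ≤ R e f)
    (hRsymm : ∀ e f, R e f = R f e) {r : ℝ} (hRsum : ∀ e, ∑ f, R e f ≤ r) (e f : W) :
    ∑ z : W × W with ¬ Disjoint ({e, f} : Finset W) {z.1, z.2}, R z.1 z.2 ≤ 4 * r := by
  set T : Finset W := {e, f}
  have hmeet : ({z | ¬ Disjoint T {z.1, z.2}} : Finset (W × W)) ⊆ T ×ˢ univ ∪ univ ×ˢ T :=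
    fun z hz ↦ by simpa [or_iff_not_imp_left] using hz
  have hr : 0 ≤ r := (sum_nonneg fun g _ ↦ hR₀ e g).trans (hRsum e)
  have hrow : ∑ e ∈ T, ∑ f, R e f ≤ 2 * r := by
    refine (sum_le_card_nsmul T _ r fun e _ ↦ hRsum e).trans ?_
    rw [nsmul_eq_mul]
    exact mul_le_mul_of_nonneg_right (mod_cast card_le_two) hr
  calc ∑ z : W × W with ¬ Disjoint T {z.1, z.2}, R z.1 z.2
      ≤ ∑ z ∈ T ×ˢ univ ∪ univ ×ˢ T, R z.1 z.2 :=
        sum_le_sum_of_subset_of_nonneg hmeet fun z _ _ ↦ hR₀ z.1 z.2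
    _ ≤ ∑ z ∈ T ×ˢ univ, R z.1 z.2 + ∑ z ∈ univ ×ˢ T, R z.1 z.2 := by
        rw [← sum_union_inter]
        exact le_add_of_nonneg_right (sum_nonneg fun z _ ↦ hR₀ z.1 z.2)
    _ = ∑ e ∈ T, ∑ f, R e f + ∑ e ∈ T, ∑ f, R e f := by
        rw [sum_product, sum_product_right]
        exact congrArg _ (sum_congr rfl fun e _ ↦ sum_congr rfl fun f _ ↦ hRsymm f e)
    _ ≤ 4 * r := by linarith

section Independent

variable [Fintype C] [MeasurableSpace C] [DiscreteMeasurableSpace C] (P : W → Measure C)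
  [∀ e, IsProbabilityMeasure (P e)]

theorem measureReal_setOf_apply_eq_apply {e f : W} (hef : e ≠ f) :
    (Measure.pi P).real {ω | ω e = ω f} = ∑ c, (P e).real {c} * (P f).real {c} := by
  have hmarginal (g : W) (c : C) : (Measure.pi P).real {ω | ω g = c} = (P g).real {c} :=
    (measurePreserving_eval P g).measureReal_preimage (MeasurableSet.singleton c).nullMeasurableSet
  have hdep (g : W) (c : C) : DependsOn (· ∈ {ω : W → C | ω g = c}) {g} := fun x y hxy ↦ by
    simp only [Set.mem_ofPred_eq, hxy g rfl]
  have hunion : {ω : W → C | ω e = ω f} = ⋃ c ∈ univ, {ω | ω e = c} ∩ {ω | ω f = c} := by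
    ext ω; simp [eq_comm]
  rw [hunion, measureReal_biUnion_finset (fun c _ c' _ hcc' ↦ Set.disjoint_left.2
    fun ω hω hω' ↦ hcc' (hω.1.symm.trans hω'.1)) fun c _ ↦ .of_discrete]
  refine sum_congr rfl fun c _ ↦ ?_
  rw [measureReal_def, measure_inter_of_dependsOn_disjoint P (hdep e c) (hdep f c)
    (Set.disjoint_singleton.2 hef), ENNReal.toReal_mul, ← measureReal_def, ← measureReal_def,
    hmarginal, hmarginal]

theorem exists_coloring_of_sum_measureReal_le (H : SimpleGraph W)
    (hcol : ∀ e, ∑ f with H.Adj e f, ∑ c, (P e).real {c} * (P f).real {c} ≤ 1 / 16) :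
    ∃ γ : H.Coloring C, ∀ e, P e {γ e} ≠ 0 := by
  let A (b : W × W) : Set (W → C) := {ω | H.Adj b.1 b.2 ∧ ω b.1 = ω b.2}
  set R : W → W → ℝ := fun e f ↦ (Measure.pi P).real (A (e, f))
  have hR₀ (e f : W) : 0 ≤ R e f := measureReal_nonneg
  have hRsymm (e f : W) : R e f = R f e := by simp only [R, A, H.adj_comm e f, eq_comm]
  have hRsum (e : W) : ∑ f, R e f ≤ 1 / 16 := by
    refine (hcol e).trans' (le_of_eq ?_)
    rw [sum_filter]
    refine sum_congr rfl fun f _ ↦ ?_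
    by_cases h : H.Adj e f
    · simp [R, A, h, measureReal_setOf_apply_eq_apply P h.ne]
    · simp [R, A, h]
  have hvars (b : W × W) : DependsOn (· ∈ A b) ({b.1, b.2} : Finset W) := fun x y hxy ↦ by
    simp only [A, Set.mem_ofPred_eq, hxy b.1 (by simp), hxy b.2 (by simp)]
  obtain ⟨ω, hω, hpos⟩ := exists_forall_notMem_of_sum_le P hvars
    (fun b ↦ (single_le_sum (fun f _ ↦ hR₀ b.1 f) (mem_univ b.2)).trans
      ((hRsum b.1).trans (by norm_num)))
    fun b ↦ (sum_not_disjoint_pair_le hR₀ hRsymm hRsum b.1 b.2).trans_eq (by norm_num)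
  exact ⟨.mk ω fun {e f} hef heq ↦ hω (e, f) ⟨hef, heq⟩, hpos⟩

end Independent

theorem exists_coloring_of_sum_weight_le [Fintype C] (H : SimpleGraph W) {μ : W → C → ℝ}
    (hμ : ∀ e c, 0 ≤ μ e c) (hlist : ∀ e, 1 ≤ ∑ c, μ e c)
    (hnbr : ∀ e c, ∑ f with H.Adj e f, μ f c ≤ 1 / 16) :
    ∃ γ : H.Coloring C, ∀ e, 0 < μ e (γ e) := by
  let _ : MeasurableSpace C := ⊤
  set p : W → C → ℝ := fun e c ↦ μ e c / ∑ c', μ e c'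
  have hp₀ (e c) : 0 ≤ p e c := div_nonneg (hμ e c) (zero_le_one.trans (hlist e))
  have hpμ (e c) : p e c ≤ μ e c := div_le_self (hμ e c) (hlist e)
  have hp₁ (e) : ∑ c, p e c = 1 := by
    rw [← sum_div, div_self (zero_lt_one.trans_le (hlist e)).ne']
  let P (e : W) : Measure C := (PMF.ofFintype (fun c ↦ ENNReal.ofReal (p e c)) (by
    rw [← ENNReal.ofReal_sum_of_nonneg fun c _ ↦ hp₀ e c, hp₁, ENNReal.ofReal_one])).toMeasure
  have hP (e c) : (P e).real {c} = p e c := by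
    rw [measureReal_def, PMF.toMeasure_apply_singleton _ _ (.of_discrete),
      PMF.ofFintype_apply, ENNReal.toReal_ofReal (hp₀ e c)]
  obtain ⟨γ, hγ⟩ := exists_coloring_of_sum_measureReal_le P H fun e ↦ by
    simp only [hP]
    calc ∑ f with H.Adj e f, ∑ c, p e c * p f c
        = ∑ c, p e c * ∑ f with H.Adj e f, p f c := by
          rw [sum_comm]; simp only [mul_sum]
      _ ≤ ∑ c, p e c * (1 / 16) := by
          gcongr with c
          · exact hp₀ e c
          · exact (sum_le_sum fun f _ ↦ hpμ f c).trans (hnbr e c)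
      _ = 1 / 16 := by rw [← sum_mul, hp₁, one_mul]
  refine ⟨γ, fun e ↦ (hpμ e _).trans_lt' ((hp₀ e _).lt_of_ne' ?_)⟩
  rw [← hP]
  exact (measureReal_ne_zero_iff).2 (hγ e)

end ListColouring

section Edges

variable {V : Type*} {G : SimpleGraph V}

theorem exists_ends (e : G.edgeSet) : ∃ u w, u ≠ w ∧ (e : Sym2 V) = s(u, w) := by
  obtain ⟨⟨u, w⟩, he⟩ := e
  exact ⟨u, w, G.ne_of_adj he, rfl⟩

theorem prod_toFinset_eq_mul {e : G.edgeSet} {u w : V} (huw : u ≠ w)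
    (he : (e : Sym2 V) = s(u, w)) (x : V → ℝ) :
    ∏ v ∈ (e : Sym2 V).toFinset, x v = x u * x w := by
  rw [he, Sym2.toFinset_mk_eq, prod_pair huw]

variable [Fintype G.edgeSet]

variable (G) in
/-- The edges of `G` incident to `v`. -/
noncomputable def edgesAt (v : V) : Finset G.edgeSet :=
  {e | v ∈ (e : Sym2 V)}

/-- The closed neighbourhood of `e` in the line graph: the edges sharing a vertex with it. -/
noncomputable def edgeNhd (e : G.edgeSet) : Finset G.edgeSet :=
  {f | ∃ v ∈ (e : Sym2 V), v ∈ (f : Sym2 V)}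

@[simp]
theorem mem_edgesAt {e : G.edgeSet} {v : V} : e ∈ edgesAt G v ↔ v ∈ (e : Sym2 V) := by
  simp [edgesAt]

@[simp]
theorem mem_edgeNhd {e f : G.edgeSet} :
    f ∈ edgeNhd e ↔ ∃ v ∈ (e : Sym2 V), v ∈ (f : Sym2 V) := by
  simp [edgeNhd]

theorem mem_edgeNhd_comm {e f : G.edgeSet} : f ∈ edgeNhd e ↔ e ∈ edgeNhd f := by
  simp only [mem_edgeNhd, and_comm]

theorem mem_edgeNhd_self (e : G.edgeSet) : e ∈ edgeNhd e := by
  obtain ⟨u, w, -, he⟩ := exists_ends e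
  simp [he]

variable {e : G.edgeSet} {u w : V}

theorem edgeNhd_eq_union (he : (e : Sym2 V) = s(u, w)) :
    edgeNhd e = edgesAt G u ∪ edgesAt G w := by
  ext f; simp [he]

theorem edgesAt_inter_edgesAt (huw : u ≠ w) (he : (e : Sym2 V) = s(u, w)) :
    edgesAt G u ∩ edgesAt G w = {e} := by
  ext f; simp [Subtype.ext_iff, he, ← Sym2.mem_and_mem_iff huw]

theorem edgeNhd_filter_notMem (huw : u ≠ w) (he : (e : Sym2 V) = s(u, w)) :
    ({f ∈ edgeNhd e | u ∉ f.1} : Finset G.edgeSet) = (edgesAt G w).erase e := by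
  ext f
  have := congrArg (f ∈ ·) (edgesAt_inter_edgesAt huw he)
  simp only [mem_inter, mem_edgesAt, mem_singleton, eq_iff_iff] at this
  simp only [edgeNhd_eq_union he, mem_filter, mem_union, mem_edgesAt, mem_erase]
  tauto

theorem sum_edgeNhd_le {R : Type*} [Semiring R] [PartialOrder R] [IsOrderedRing R]
    {x : G.edgeSet → R} {d : R} (hx : ∀ f, 0 ≤ x f) (hd : ∀ v, ∑ f ∈ edgesAt G v, x f ≤ d)
    (e : G.edgeSet) : ∑ f ∈ edgeNhd e, x f ≤ 2 * d := by
  obtain ⟨u, w, -, he⟩ := exists_ends e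
  calc ∑ f ∈ edgeNhd e, x f
      ≤ ∑ f ∈ edgesAt G u, x f + ∑ f ∈ edgesAt G w, x f := by
        rw [edgeNhd_eq_union he, ← sum_union_inter]
        exact le_add_of_nonneg_right (sum_nonneg fun f _ ↦ hx f)
    _ ≤ 2 * d := by rw [two_mul]; exact add_le_add (hd u) (hd w)

theorem card_edgeNhd_filter_le {p : G.edgeSet → Prop} {N : ℕ}
    (hN : ∀ v, #{f ∈ edgesAt G v | p f} ≤ N) (e : G.edgeSet) : #{f ∈ edgeNhd e | p f} ≤ 2 * N := by
  simp only [card_filter] at hN ⊢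
  exact sum_edgeNhd_le (fun _ ↦ Nat.zero_le _) hN e

theorem card_edgeNhd_inter_edgesAt_le {f : G.edgeSet} {v : V} (hv : v ∉ (f : Sym2 V)) :
    #(edgeNhd f ∩ edgesAt G v) ≤ 2 := by
  obtain ⟨x, y, -, hf⟩ := exists_ends f
  have hone (z : V) (hz : z ∈ (f : Sym2 V)) : #(edgesAt G z ∩ edgesAt G v) ≤ 1 := by
    refine card_le_one.2 fun e he e' he' ↦ ?_
    simp only [mem_inter, mem_edgesAt] at he he'
    have hzv : z ≠ v := fun h ↦ hv (h ▸ hz)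
    exact Subtype.ext (((Sym2.mem_and_mem_iff hzv).1 he).trans
      ((Sym2.mem_and_mem_iff hzv).1 he').symm)
  rw [edgeNhd_eq_union hf, union_inter_distrib_right]
  exact (card_union_le _ _).trans (add_le_add (hone x (by simp [hf])) (hone y (by simp [hf])))

end Edges

section Weights

variable {V C : Type*} {G : SimpleGraph V} [Fintype G.edgeSet]

/-- The weights `μ` are nonnegative and every colour has total weight at most `d` at each vertex. -/
structure DegreeLE (μ : G.edgeSet → C → ℝ) (d : ℝ) : Prop where
  nonneg (e c) : 0 ≤ μ e c
  sum_le (v c) : ∑ e ∈ edgesAt G v, μ e c ≤ d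

/-- The probability that no edge at `v` is activated in the colour `c`, when each edge `f` is
activated independently with probability `θ * μ f c`. -/
noncomputable def vertexSurvival (θ : ℝ) (μ : G.edgeSet → C → ℝ) (v : V) (c : C) : ℝ :=
  ∏ f ∈ edgesAt G v, (1 - θ * μ f c)

/-- The weight of a colour that survives a round. Dividing by the survival probabilities at both
ends makes the expected weight of every list at least what it was before. -/
noncomputable def scaledWeight (θ : ℝ) (μ : G.edgeSet → C → ℝ) (e : G.edgeSet) (c : C) : ℝ :=
  μ e c / ∏ v ∈ (e : Sym2 V).toFinset, vertexSurvival θ μ v c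

variable {μ : G.edgeSet → C → ℝ} {d : ℝ}

theorem DegreeLE.le (hμ : DegreeLE μ d) (e : G.edgeSet) (c : C) : μ e c ≤ d := by
  obtain ⟨u, w, -, he⟩ := exists_ends e
  exact (single_le_sum (f := (μ · c)) (fun f _ ↦ hμ.nonneg f c)
    (mem_edgesAt.2 (he ▸ Sym2.mem_mk_left u w))).trans (hμ.sum_le u c)

theorem DegreeLE.mono {d' : ℝ} (hμ : DegreeLE μ d) (hd : d ≤ d') : DegreeLE μ d' :=
  ⟨hμ.nonneg, fun v c ↦ (hμ.sum_le v c).trans hd⟩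

variable {θ : ℝ} (hμ : DegreeLE μ 1) (hθ₀ : 0 ≤ θ) (hθ : θ ≤ 1 / 2)

include hμ hθ₀ hθ

theorem DegreeLE.mul_mem_Icc (e : G.edgeSet) (c : C) : θ * μ e c ∈ Set.Icc 0 (1 / 2) :=
  ⟨mul_nonneg hθ₀ (hμ.nonneg e c), (mul_le_of_le_one_right hθ₀ (hμ.le e c)).trans hθ⟩

theorem one_sub_le_vertexSurvival (v : V) (c : C) : 1 - θ ≤ vertexSurvival θ μ v c := by
  have h (f : G.edgeSet) := hμ.mul_mem_Icc hθ₀ hθ f c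
  refine le_trans ?_ (one_sub_sum_le_prod_one_sub (edgesAt G v) (fun f _ ↦ (h f).1)
    fun f _ ↦ (h f).2.trans (by norm_num))
  rw [← mul_sum]
  linarith [mul_le_of_le_one_right hθ₀ (hμ.sum_le v c)]

theorem half_le_vertexSurvival (v : V) (c : C) : 1 / 2 ≤ vertexSurvival θ μ v c := by
  linarith [one_sub_le_vertexSurvival hμ hθ₀ hθ v c]

theorem quarter_le_prod_vertexSurvival (e : G.edgeSet) (c : C) :
    1 / 4 ≤ ∏ v ∈ (e : Sym2 V).toFinset, vertexSurvival θ μ v c := by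
  obtain ⟨u, w, huw, he⟩ := exists_ends e
  rw [prod_toFinset_eq_mul huw he]
  nlinarith [half_le_vertexSurvival hμ hθ₀ hθ u c, half_le_vertexSurvival hμ hθ₀ hθ w c]

theorem scaledWeight_nonneg (e : G.edgeSet) (c : C) : 0 ≤ scaledWeight θ μ e c :=
  div_nonneg (hμ.nonneg e c) (by linarith [quarter_le_prod_vertexSurvival hμ hθ₀ hθ e c])

theorem scaledWeight_le_four_mul (e : G.edgeSet) (c : C) : scaledWeight θ μ e c ≤ 4 * μ e c := by
  have h := quarter_le_prod_vertexSurvival hμ hθ₀ hθ e c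
  rw [scaledWeight, div_le_iff₀ (by linarith)]
  nlinarith [hμ.nonneg e c]

theorem prod_vertexSurvival_le (e : G.edgeSet) (c : C) :
    ∏ v ∈ (e : Sym2 V).toFinset, vertexSurvival θ μ v c ≤ ∏ f ∈ edgeNhd e, (1 - θ * μ f c) := by
  obtain ⟨u, w, huw, he⟩ := exists_ends e
  have h (f : G.edgeSet) := hμ.mul_mem_Icc hθ₀ hθ f c
  rw [prod_toFinset_eq_mul huw he, edgeNhd_eq_union he, vertexSurvival, vertexSurvival,
    ← prod_union_inter, edgesAt_inter_edgesAt huw he, prod_singleton]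
  exact mul_le_of_le_one_right (prod_nonneg fun f _ ↦ by linarith [(h f).2])
    (sub_le_self 1 (h e).1)

theorem le_scaledWeight_mul_prod (e : G.edgeSet) (c : C) :
    μ e c ≤ scaledWeight θ μ e c * ∏ f ∈ edgeNhd e, (1 - θ * μ f c) := by
  have h := quarter_le_prod_vertexSurvival hμ hθ₀ hθ e c
  calc μ e c = scaledWeight θ μ e c * ∏ v ∈ (e : Sym2 V).toFinset, vertexSurvival θ μ v c :=
        (div_mul_cancel₀ _ (by linarith)).symm
    _ ≤ _ := mul_le_mul_of_nonneg_left (prod_vertexSurvival_le hμ hθ₀ hθ e c)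
        (scaledWeight_nonneg hμ hθ₀ hθ e c)

theorem scaledWeight_mul_prod_le {e : G.edgeSet} {v : V} (hv : v ∈ (e : Sym2 V)) (c : C) :
    scaledWeight θ μ e c * ∏ f ∈ edgeNhd e with v ∉ f.1, (1 - θ * μ f c) ≤
      μ e c / ((1 - θ) * (1 - θ * μ e c)) := by
  obtain ⟨w, he⟩ := Sym2.mem_iff_exists.1 hv
  have hvw : v ≠ w := G.ne_of_adj ((SimpleGraph.mem_edgeSet G).1 (he ▸ e.2))
  have h := (hμ.mul_mem_Icc hθ₀ hθ e c).2
  have hv' := one_sub_le_vertexSurvival hμ hθ₀ hθ v c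
  have hw := half_le_vertexSurvival hμ hθ₀ hθ w c
  have herase : (1 - θ * μ e c) * ∏ f ∈ (edgesAt G w).erase e, (1 - θ * μ f c) =
      vertexSurvival θ μ w c :=
    mul_prod_erase _ (fun f ↦ 1 - θ * μ f c) (mem_edgesAt.2 (he ▸ Sym2.mem_mk_right v w))
  rw [edgeNhd_filter_notMem hvw he, scaledWeight, prod_toFinset_eq_mul hvw he]
  calc μ e c / (vertexSurvival θ μ v c * vertexSurvival θ μ w c) *
        ∏ f ∈ (edgesAt G w).erase e, (1 - θ * μ f c)
      = μ e c / (vertexSurvival θ μ v c * (1 - θ * μ e c)) := by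
        rw [div_mul_eq_mul_div, div_eq_div_iff (by nlinarith) (by nlinarith), ← herase]
        ring
    _ ≤ μ e c / ((1 - θ) * (1 - θ * μ e c)) := by
        refine div_le_div_of_nonneg_left (hμ.nonneg e c) (by nlinarith) ?_
        exact mul_le_mul_of_nonneg_right hv' (by linarith)

end Weights

section Activation

variable {V C : Type*} {G : SimpleGraph V} [Fintype G.edgeSet]

/-- The event that the edge `f` is activated in the colour `c`. An outcome tosses a coin for every
edge and colour; coins of colours with weight `0` are ignored, so that they create no dependence. -/
def activated (μ : G.edgeSet → C → ℝ) (f : G.edgeSet) (c : C) : Set (G.edgeSet × C → Bool) :=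
  {ω | ω (f, c) = true ∧ 0 < μ f c}

/-- The event that neither `e` nor an edge sharing a vertex with `e` is activated in `c`. -/
def survived (μ : G.edgeSet → C → ℝ) (e : G.edgeSet) (c : C) : Set (G.edgeSet × C → Bool) :=
  avoid (activated μ · c) (edgeNhd e)

/-- The event that `e` receives the colour `c`: it is activated in `c` and no other edge sharing a
vertex with `e` is. -/
def assigned (μ : G.edgeSet → C → ℝ) (e : G.edgeSet) (c : C) : Set (G.edgeSet × C → Bool) :=
  activated μ e c ∩ avoid (activated μ · c) ((edgeNhd e).erase e)

/-- The event that `e` receives some colour. -/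
def coloured (μ : G.edgeSet → C → ℝ) (e : G.edgeSet) : Set (G.edgeSet × C → Bool) :=
  ⋃ c, assigned μ e c

/-- The weights after one round. -/
noncomputable def nibbleWeight (θ : ℝ) (μ : G.edgeSet → C → ℝ) (ω : G.edgeSet × C → Bool)
    (e : G.edgeSet) (c : C) : ℝ :=
  if ω ∈ survived μ e c \ coloured μ e then scaledWeight θ μ e c else 0

variable {μ : G.edgeSet → C → ℝ} {ω ω' : G.edgeSet × C → Bool} {e f : G.edgeSet} {c c' : C}

theorem notMem_activated_of_mem_survived (hω : ω ∈ survived μ e c) (hf : f ∈ edgeNhd e) :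
    ω ∉ activated μ f c :=
  mem_avoid.1 hω f hf

theorem notMem_activated_of_mem_assigned (hω : ω ∈ assigned μ e c) (hf : f ∈ edgeNhd e)
    (hfe : f ≠ e) : ω ∉ activated μ f c :=
  mem_avoid.1 hω.2 f (mem_erase.2 ⟨hfe, hf⟩)

section Dependence

omit [Fintype G.edgeSet] in
theorem mem_activated_congr (h : 0 < μ f c → ω (f, c) = ω' (f, c)) :
    ω ∈ activated μ f c ↔ ω' ∈ activated μ f c :=
  and_congr_left fun hf ↦ by rw [h hf]

omit [Fintype G.edgeSet] in
theorem mem_avoid_activated_congr {T : Finset G.edgeSet}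
    (h : ∀ f ∈ T, 0 < μ f c → ω (f, c) = ω' (f, c)) :
    ω ∈ avoid (activated μ · c) T ↔ ω' ∈ avoid (activated μ · c) T := by
  simp only [mem_avoid]
  exact forall₂_congr fun f hf ↦ not_congr (mem_activated_congr (h f hf))

theorem mem_assigned_congr
    (h : 0 < μ e c → ∀ f ∈ edgeNhd e, 0 < μ f c → ω (f, c) = ω' (f, c)) :
    ω ∈ assigned μ e c ↔ ω' ∈ assigned μ e c := by
  by_cases he : 0 < μ e c
  · exact and_congr (mem_activated_congr (h he e (mem_edgeNhd_self e)))
      (mem_avoid_activated_congr fun f hf ↦ h he f (mem_of_mem_erase hf))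
  · exact iff_of_false (fun hω ↦ he hω.1.2) fun hω ↦ he hω.1.2

end Dependence

section Probability

/-- The distribution of a coin: heads with probability `θ * μ z.1 z.2`, clamped to `[0, 1]`. -/
noncomputable def coin (θ : ℝ) (μ : G.edgeSet → C → ℝ) (z : G.edgeSet × C) : Measure Bool :=
  bernoulliMeasure true false (Set.projIcc 0 1 zero_le_one (θ * μ z.1 z.2))

instance (θ : ℝ) (z : G.edgeSet × C) : IsProbabilityMeasure (coin θ μ z) := by
  unfold coin; infer_instance

variable [Fintype C] {θ : ℝ}
  (hμ : DegreeLE μ 1) (hθ₀ : 0 ≤ θ) (hθ : θ ≤ 1 / 2)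

include hμ hθ₀ hθ

theorem measureReal_activated (f : G.edgeSet) (c : C) :
    (Measure.pi (coin θ μ)).real (activated μ f c) = θ * μ f c := by
  have hp := hμ.mul_mem_Icc hθ₀ hθ f c
  rcases (hμ.nonneg f c).eq_or_lt with h | h
  · simp [activated, ← h]
  have hpre : activated μ f c = (fun ω ↦ ω (f, c)) ⁻¹' {true} := by
    ext ω; simp [activated, h]
  rw [hpre, (measurePreserving_eval (coin θ μ) (f, c)).measureReal_preimage
    (MeasurableSet.singleton true).nullMeasurableSet, coin,
    bernoulliMeasure_real_apply_of_mem_of_notMem _ (.singleton true) (Set.mem_singleton true)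
      (by simp),
    Set.projIcc_of_mem _ (Set.Icc_subset_Icc_right (by norm_num) hp)]

theorem measureReal_avoid_activated (c : C) (T : Finset G.edgeSet) :
    (Measure.pi (coin θ μ)).real (avoid (activated μ · c) T) = ∏ f ∈ T, (1 - θ * μ f c) := by
  rw [measureReal_avoid_of_pairwise_disjoint (coin θ μ) (S := fun f ↦ {(f, c)})
    (fun f x y hxy ↦ propext (mem_activated_congr fun _ ↦ hxy _ rfl))
    fun f f' hff' ↦ by simpa [Function.onFun] using hff']
  simp only [measureReal_activated hμ hθ₀ hθ]

theorem le_measureReal_assigned (e : G.edgeSet) (c : C) :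
    θ * (1 - 2 * θ) * μ e c ≤ (Measure.pi (coin θ μ)).real (assigned μ e c) := by
  have hp (f : G.edgeSet) := hμ.mul_mem_Icc hθ₀ hθ f c
  have hsum : ∑ f ∈ (edgeNhd e).erase e, θ * μ f c ≤ 2 * θ := by
    rw [← mul_sum, mul_comm]
    exact mul_le_mul_of_nonneg_right ((sum_le_sum_of_subset_of_nonneg (erase_subset _ _)
      fun f _ _ ↦ hμ.nonneg f c).trans ((sum_edgeNhd_le (fun f ↦ hμ.nonneg f c)
        (fun v ↦ hμ.sum_le v c) e).trans_eq (mul_one 2))) hθ₀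
  have hprod := one_sub_sum_le_prod_one_sub ((edgeNhd e).erase e) (fun f _ ↦ (hp f).1)
    fun f _ ↦ (hp f).2.trans (by norm_num)
  rw [assigned, measureReal_inter_avoid_of_disjoint (coin θ μ) (A := (activated μ · c))
    (S := fun f ↦ {(f, c)}) (fun f x y hxy ↦ propext (mem_activated_congr fun _ ↦ hxy _ rfl))
    fun f hf ↦ by simpa using (ne_of_mem_erase hf).symm,
    measureReal_activated hμ hθ₀ hθ, measureReal_avoid_activated hμ hθ₀ hθ]
  nlinarith [(hp e).1]

end Probability

end Activation

section BadEvents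

variable {V C : Type*} {G : SimpleGraph V} [Fintype G.edgeSet]

/-- The events, other than activations at `v`, that make the colour `c` disappear from the edge `e`
at `v`: another edge meeting `e` away from `v` is activated in `c`, or `e` receives a colour `c'`
other than `c`. Activations at `v` are left out as a single one of them would affect all edges
at `v`. -/
def removal (μ : G.edgeSet → C → ℝ) (v : V) (c : C) (e : G.edgeSet) :
    G.edgeSet ⊕ C → Set (G.edgeSet × C → Bool) :=
  Sum.elim (fun f ↦ {ω | (v ∉ (f : Sym2 V) ∧ f ∈ edgeNhd e) ∧ ω ∈ activated μ f c})
    fun c' ↦ {ω | c' ≠ c ∧ ω ∈ assigned μ e c'}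

/-- The coins that decide the events `removal μ v c e j` for all edges `e` at `v`. -/
def removalCoins (c : C) : G.edgeSet ⊕ C → Set (G.edgeSet × C) :=
  Sum.elim (fun f ↦ {(f, c)}) fun c' ↦ {z | z.2 = c' ∧ c' ≠ c}

variable {μ : G.edgeSet → C → ℝ} {v : V} {c : C}

theorem dependsOn_removal (v : V) (c : C) (e : G.edgeSet) (j : G.edgeSet ⊕ C) :
    DependsOn (· ∈ removal μ v c e j) (removalCoins c j) := fun x y hxy ↦ by
  rcases j with f | c'
  · exact propext (and_congr_right' (mem_activated_congr fun _ ↦ hxy _ rfl))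
  · exact propext (and_congr_right fun hc' ↦ mem_assigned_congr fun _ f _ _ ↦ hxy _ ⟨rfl, hc'⟩)

omit [Fintype G.edgeSet] in
theorem pairwise_disjoint_removalCoins (c : C) :
    Pairwise (Function.onFun Disjoint (removalCoins (G := G) c)) := by
  rintro (f | c₁) (f' | c₂) h
  all_goals
    refine Set.disjoint_left.2 ?_
    simp only [removalCoins, Sum.elim_inl, Sum.elim_inr, Set.mem_singleton_iff, Set.mem_ofPred_eq]
    rintro ⟨f₀, c₀⟩
    grind

theorem survived_diff_coloured_subset_avoid [Fintype C] (v : V) (c : C) (e : G.edgeSet) :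
    survived μ e c \ coloured μ e ⊆ avoid (removal μ v c e) univ := fun ω hω ↦ by
  refine mem_avoid.2 fun j _ hj ↦ ?_
  rcases j with f | c'
  · exact notMem_activated_of_mem_survived hω.1 hj.1.2 hj.2
  · exact hω.2 (Set.mem_iUnion.2 ⟨c', hj.2⟩)

variable {θ l d M K η : ℝ}

theorem sum_scaledWeight_mem_removal_le (hμ : DegreeLE μ 1) (hθ₀ : 0 ≤ θ) (hθ : θ ≤ 1 / 2)
    (hM₀ : 0 ≤ M) (hM : ∀ e c, μ e c ≤ M) (v : V) (c : C) (j : G.edgeSet ⊕ C)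
    (ω : G.edgeSet × C → Bool) :
    ∑ e ∈ edgesAt G v with ω ∈ removal μ v c e j, scaledWeight θ μ e c ≤ 8 * M := by
  have hcard : #{e ∈ edgesAt G v | ω ∈ removal μ v c e j} ≤ 2 := by
    rcases j with f | c'
    · by_cases hv : v ∈ (f : Sym2 V)
      · simp [removal, hv]
      · refine (card_le_card fun e he ↦ ?_).trans (card_edgeNhd_inter_edgesAt_le hv)
        obtain ⟨hev, ⟨-, hfe⟩, -⟩ := mem_filter.1 he
        exact mem_inter.2 ⟨mem_edgeNhd_comm.1 hfe, hev⟩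
    · refine (card_le_one.2 fun e he e' he' ↦ ?_).trans one_le_two
      obtain ⟨hev, -, hω⟩ := mem_filter.1 he
      obtain ⟨hev', -, hω'⟩ := mem_filter.1 he'
      by_contra hne
      exact notMem_activated_of_mem_assigned hω
        (mem_edgeNhd.2 ⟨v, mem_edgesAt.1 hev, mem_edgesAt.1 hev'⟩) (Ne.symm hne) hω'.1
  calc ∑ e ∈ edgesAt G v with ω ∈ removal μ v c e j, scaledWeight θ μ e c
      ≤ #{e ∈ edgesAt G v | ω ∈ removal μ v c e j} • (4 * M) :=
        sum_le_card_nsmul _ _ _ fun e _ ↦ (scaledWeight_le_four_mul hμ hθ₀ hθ e c).trans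
          (by linarith [hM e c])
    _ ≤ 2 * (4 * M) := by
        rw [nsmul_eq_mul]
        exact mul_le_mul_of_nonneg_right (mod_cast hcard) (by linarith)
    _ = 8 * M := by ring

/-- The event that `c` does not survive at `e`, as the member `c` of a family indexed by all
colours. The members are independent since coins of different colours are. -/
def extinction (μ : G.edgeSet → C → ℝ) (e : G.edgeSet) (c j : C) :
    Set (G.edgeSet × C → Bool) :=
  {ω | j = c ∧ ω ∉ survived μ e c}

theorem dependsOn_extinction (e : G.edgeSet) (c j : C) :
    DependsOn (· ∈ extinction μ e c j) {z : G.edgeSet × C | z.2 = j} := fun _ _ hxy ↦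
  propext (and_congr_right fun hj ↦ not_congr
    (mem_avoid_activated_congr fun f _ _ ↦ hxy (f, c) hj.symm))

theorem pairwise_disjoint_setOf_snd_eq {α β : Type*} :
    Pairwise (Function.onFun Disjoint fun b : β ↦ {z : α × β | z.2 = b}) :=
  fun _ _ hbb' ↦ Set.disjoint_left.2 fun _ hz hz' ↦ hbb' (hz.symm.trans hz')

variable [Fintype C]

theorem avoid_extinction (e : G.edgeSet) (c : C) :
    avoid (extinction μ e c) univ = survived μ e c := by
  ext ω; simp [extinction, mem_avoid]

theorem sum_scaledWeight_mem_extinction_le (hμ : DegreeLE μ 1) (hθ₀ : 0 ≤ θ) (hθ : θ ≤ 1 / 2)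
    (hM : ∀ e c, μ e c ≤ M) (e : G.edgeSet) (j : C) (ω : G.edgeSet × C → Bool) :
    ∑ c with ω ∈ extinction μ e c j, scaledWeight θ μ e c ≤ 4 * M := by
  have hsub : ({c | ω ∈ extinction μ e c j} : Finset C) ⊆ {j} := fun c hc ↦
    mem_singleton.2 (mem_filter.1 hc).2.1.symm
  calc ∑ c with ω ∈ extinction μ e c j, scaledWeight θ μ e c
      ≤ ∑ c ∈ {j}, scaledWeight θ μ e c :=
        sum_le_sum_of_subset_of_nonneg hsub fun c _ _ ↦ scaledWeight_nonneg hμ hθ₀ hθ e c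
    _ ≤ 4 * M := by
        rw [sum_singleton]
        linarith [scaledWeight_le_four_mul hμ hθ₀ hθ e j, hM e j]

theorem prod_one_sub_assigned_le (hμ : DegreeLE μ 1) (hθ₀ : 0 ≤ θ) (hθ : θ ≤ 1 / 2)
    (hM : ∀ e c, μ e c ≤ M) {e : G.edgeSet} (hl : l ≤ ∑ c, μ e c) (c : C) :
    ∏ c' ∈ univ.erase c, (1 - (Measure.pi (coin θ μ)).real (assigned μ e c')) ≤
      Real.exp (-(θ * (1 - 2 * θ) * (l - M))) := by
  have hsum : θ * (1 - 2 * θ) * (l - M) ≤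
      ∑ c' ∈ univ.erase c, (Measure.pi (coin θ μ)).real (assigned μ e c') :=
    calc θ * (1 - 2 * θ) * (l - M) ≤ θ * (1 - 2 * θ) * ∑ c' ∈ univ.erase c, μ e c' := by
          refine mul_le_mul_of_nonneg_left ?_ (mul_nonneg hθ₀ (by linarith))
          linarith [hM e c, add_sum_erase univ (μ e) (mem_univ c)]
      _ ≤ _ := by
          rw [mul_sum]
          exact sum_le_sum fun c' _ ↦ le_measureReal_assigned hμ hθ₀ hθ e c'
  calc ∏ c' ∈ univ.erase c, (1 - (Measure.pi (coin θ μ)).real (assigned μ e c'))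
      ≤ ∏ c' ∈ univ.erase c, Real.exp (-(Measure.pi (coin θ μ)).real (assigned μ e c')) :=
        prod_le_prod (fun c' _ ↦ sub_nonneg.2 measureReal_le_one)
          fun c' _ ↦ Real.one_sub_le_exp_neg _
    _ ≤ Real.exp (-(θ * (1 - 2 * θ) * (l - M))) := by
        rw [← Real.exp_sum, sum_neg_distrib]
        exact Real.exp_le_exp.2 (neg_le_neg hsum)

theorem measureReal_avoid_removal (hμ : DegreeLE μ 1) (hθ₀ : 0 ≤ θ) (hθ : θ ≤ 1 / 2) (v : V)
    (c : C) (e : G.edgeSet) : (Measure.pi (coin θ μ)).real (avoid (removal μ v c e) univ) =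
      (∏ f ∈ edgeNhd e with v ∉ f.1, (1 - θ * μ f c)) *
        ∏ c' ∈ univ.erase c, (1 - (Measure.pi (coin θ μ)).real (assigned μ e c')) := by
  rw [measureReal_avoid_of_pairwise_disjoint _ (dependsOn_removal v c e)
    (pairwise_disjoint_removalCoins c), Fintype.prod_sum_type]
  have hinl (f : G.edgeSet) : 1 - (Measure.pi (coin θ μ)).real (removal μ v c e (.inl f)) =
      if f ∈ edgeNhd e then if v ∉ f.1 then 1 - θ * μ f c else 1 else 1 := by
    rw [← measureReal_activated hμ hθ₀ hθ f c]
    split_ifs with h h' <;> simp [removal, *, -mem_edgeNhd]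
  have hinr (c' : C) : 1 - (Measure.pi (coin θ μ)).real (removal μ v c e (.inr c')) =
      if c' ≠ c then 1 - (Measure.pi (coin θ μ)).real (assigned μ e c') else 1 := by
    split_ifs with h <;> simp [removal, h]
  simp only [hinl, hinr, prod_ite_mem, univ_inter, ← prod_filter, filter_ne']

theorem scaledWeight_mul_measureReal_avoid_removal_le (hμ : DegreeLE μ 1) (hθ₀ : 0 ≤ θ)
    (hθ : θ ≤ 1 / 2) (hM : ∀ e c, μ e c ≤ M) (hM₁ : M ≤ 1)
    (hK : Real.exp (-(θ * (1 - 2 * θ) * (l - M))) ≤ K * ((1 - θ) * (1 - θ * M)))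
    {v : V} {e : G.edgeSet} (hv : v ∈ (e : Sym2 V)) (hl : l ≤ ∑ c, μ e c) (c : C) :
    scaledWeight θ μ e c * (Measure.pi (coin θ μ)).real (avoid (removal μ v c e) univ) ≤
      K * μ e c := by
  have hθM : θ * μ e c ≤ θ * M := mul_le_mul_of_nonneg_left (hM e c) hθ₀
  have hθM₁ : θ * M ≤ 1 / 2 := (mul_le_of_le_one_right hθ₀ hM₁).trans hθ
  have hden : (1 - θ) * (1 - θ * M) ≤ (1 - θ) * (1 - θ * μ e c) :=
    mul_le_mul_of_nonneg_left (by linarith) (by linarith)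
  have hden₀ : 0 < (1 - θ) * (1 - θ * M) := mul_pos (by linarith) (by linarith)
  calc scaledWeight θ μ e c * (Measure.pi (coin θ μ)).real (avoid (removal μ v c e) univ)
      = scaledWeight θ μ e c * (∏ f ∈ edgeNhd e with v ∉ f.1, (1 - θ * μ f c)) *
          ∏ c' ∈ univ.erase c, (1 - (Measure.pi (coin θ μ)).real (assigned μ e c')) := by
        rw [measureReal_avoid_removal hμ hθ₀ hθ, mul_assoc]
    _ ≤ μ e c / ((1 - θ) * (1 - θ * M)) * (K * ((1 - θ) * (1 - θ * M))) := by
        refine mul_le_mul ?_ ((prod_one_sub_assigned_le hμ hθ₀ hθ hM hl c).trans hK)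
          (prod_nonneg fun c' _ ↦ sub_nonneg.2 measureReal_le_one)
          (div_nonneg (hμ.nonneg e c) hden₀.le)
        exact (scaledWeight_mul_prod_le hμ hθ₀ hθ hv c).trans
          (div_le_div_of_nonneg_left (hμ.nonneg e c) hden₀ hden)
    _ = K * μ e c := by
        rw [mul_left_comm, div_mul_cancel₀ _ hden₀.ne']

theorem sum_nibbleWeight_le (hμ : DegreeLE μ 1) (hθ₀ : 0 ≤ θ) (hθ : θ ≤ 1 / 2) (v : V) (c : C)
    (ω : G.edgeSet × C → Bool) : ∑ e ∈ edgesAt G v, nibbleWeight θ μ ω e c ≤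
      ∑ e ∈ edgesAt G v with ω ∈ avoid (removal μ v c e) univ, scaledWeight θ μ e c := by
  simp only [nibbleWeight]
  rw [← sum_filter]
  exact sum_le_sum_of_subset_of_nonneg
    (monotone_filter_right _ fun e _ he ↦ survived_diff_coloured_subset_avoid v c e he)
    fun e _ _ ↦ scaledWeight_nonneg hμ hθ₀ hθ e c

theorem measureReal_le_sum_nibbleWeight_le (hμ : DegreeLE μ d) (hd : d ≤ 1) (hθ₀ : 0 ≤ θ)
    (hθ : θ ≤ 1 / 2) (hM₀ : 0 < M) (hM₁ : M ≤ 1) (hM : ∀ e c, μ e c ≤ M) (hη₀ : 0 ≤ η)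
    (hη₁ : η ≤ 1) (hK₀ : 0 ≤ K)
    (hK : Real.exp (-(θ * (1 - 2 * θ) * (l - M))) ≤ K * ((1 - θ) * (1 - θ * M)))
    (hl : ∀ e c, 0 < μ e c → l ≤ ∑ c, μ e c) (v : V) (c : C) :
    (Measure.pi (coin θ μ)).real {ω | K * d + η ≤ ∑ e ∈ edgesAt G v, nibbleWeight θ μ ω e c} ≤
      Real.exp (-(η ^ 2 / (256 * M))) := by
  have hμ₁ := hμ.mono hd
  have hmean : ∑ e ∈ edgesAt G v, scaledWeight θ μ e c *
      (Measure.pi (coin θ μ)).real (avoid (removal μ v c e) univ) ≤ K * d := by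
    refine le_trans ?_ (mul_le_mul_of_nonneg_left (hμ.sum_le v c) hK₀)
    rw [mul_sum]
    refine sum_le_sum fun e he ↦ ?_
    rcases (hμ.nonneg e c).eq_or_lt with h | h
    · simp [scaledWeight, ← h]
    · exact scaledWeight_mul_measureReal_avoid_removal_le hμ₁ hθ₀ hθ hM hM₁ hK
        (mem_edgesAt.1 he) (hl e c h) c
  have htotal : ∑ e ∈ edgesAt G v, scaledWeight θ μ e c ≤ 4 :=
    calc ∑ e ∈ edgesAt G v, scaledWeight θ μ e c ≤ ∑ e ∈ edgesAt G v, 4 * μ e c :=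
          sum_le_sum fun e _ ↦ scaledWeight_le_four_mul hμ₁ hθ₀ hθ e c
      _ ≤ 4 := by rw [← mul_sum]; linarith [hμ₁.sum_le v c]
  calc (Measure.pi (coin θ μ)).real {ω | K * d + η ≤ ∑ e ∈ edgesAt G v, nibbleWeight θ μ ω e c}
      ≤ (Measure.pi (coin θ μ)).real {ω | K * d + η ≤
          ∑ e ∈ edgesAt G v with ω ∈ avoid (removal μ v c e) univ, scaledWeight θ μ e c} :=
        measureReal_mono fun ω hω ↦ hω.trans (sum_nibbleWeight_le hμ₁ hθ₀ hθ v c ω)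
    _ ≤ _ := measureReal_le_sum_avoid_le _ (dependsOn_removal v c)
        (pairwise_disjoint_removalCoins c) (fun e ↦ scaledWeight_nonneg hμ₁ hθ₀ hθ e c)
        (by positivity : 0 < 8 * M) (sum_scaledWeight_mem_removal_le hμ₁ hθ₀ hθ hM₀.le hM v c)
        (by positivity : 0 ≤ η / 16) (by linarith) univ _
    _ ≤ Real.exp (-(η / 16 / (8 * M)) * (η / 2)) := by
        refine Real.exp_le_exp.2 (mul_le_mul_of_nonpos_left ?_ (neg_nonpos.2 (by positivity)))
        nlinarith
    _ = Real.exp (-(η ^ 2 / (256 * M))) := by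
        congr 1; field_simp; ring

theorem measureReal_sum_survived_le_le (hμ : DegreeLE μ 1) (hθ₀ : 0 ≤ θ)
    (hθ : θ ≤ 1 / 2) (hM₀ : 0 < M) (hM : ∀ e c, μ e c ≤ M) (hη₀ : 0 ≤ η)
    (hη₁ : η ≤ 1) {e : G.edgeSet} (hl : l ≤ ∑ c, μ e c) (hl₂ : l ≤ 2) :
    (Measure.pi (coin θ μ)).real
        {ω | ∑ c with ω ∈ survived μ e c, scaledWeight θ μ e c ≤ l - η} ≤
      Real.exp (-(η ^ 2 / (256 * M))) := by
  have hweight (c : C) : scaledWeight θ μ e c ≤ 4 * μ e c :=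
    scaledWeight_le_four_mul hμ hθ₀ hθ e c
  have hmean : ∑ c, μ e c ≤ ∑ c, scaledWeight θ μ e c *
      (Measure.pi (coin θ μ)).real (avoid (extinction μ e c) univ) := by
    refine sum_le_sum fun c _ ↦ ?_
    rw [avoid_extinction, survived, measureReal_avoid_activated hμ hθ₀ hθ]
    exact le_scaledWeight_mul_prod hμ hθ₀ hθ e c
  have htotal : ∑ c, scaledWeight θ μ e c ≤ 4 * ∑ c, μ e c := by
    rw [mul_sum]
    exact sum_le_sum fun c _ ↦ hweight c
  calc (Measure.pi (coin θ μ)).real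
        {ω | ∑ c with ω ∈ survived μ e c, scaledWeight θ μ e c ≤ l - η}
      = (Measure.pi (coin θ μ)).real {ω | ∑ c with ω ∈ avoid (extinction μ e c) univ,
          scaledWeight θ μ e c ≤ l - η} := by simp only [avoid_extinction]
    _ ≤ _ := measureReal_sum_avoid_le_le _ (dependsOn_extinction e) pairwise_disjoint_setOf_snd_eq
        (fun c ↦ scaledWeight_nonneg hμ hθ₀ hθ e c) (by positivity : 0 < 4 * M)
        (sum_scaledWeight_mem_extinction_le hμ hθ₀ hθ hM e)
        (by positivity : 0 ≤ η / 16) (by linarith) univ _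
    _ ≤ Real.exp (-(η / 16 / (4 * M)) * (η / 2)) := by
        refine Real.exp_le_exp.2 (mul_le_mul_of_nonpos_left ?_ (neg_nonpos.2 (by positivity)))
        nlinarith
    _ ≤ Real.exp (-(η ^ 2 / (256 * M))) := by
        refine Real.exp_le_exp.2 ?_
        have : η / 16 / (4 * M) * (η / 2) = 2 * (η ^ 2 / (256 * M)) := by field_simp; ring
        have : 0 ≤ η ^ 2 / (256 * M) := by positivity
        linarith

end BadEvents

section Dependence

variable {V C : Type*} {G : SimpleGraph V} [Fintype G.edgeSet] [Fintype C]

/-- The coins that decide the new weights of the edge `e`. -/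
noncomputable def listCoins (μ : G.edgeSet → C → ℝ) (e : G.edgeSet) : Finset (G.edgeSet × C) :=
  {z | z.1 ∈ edgeNhd e ∧ 0 < μ z.1 z.2 ∧ 0 < μ e z.2}

/-- The coins that decide the new weights of the colour `c` at the vertex `v`. -/
noncomputable def vertexCoins (μ : G.edgeSet → C → ℝ) (v : V) (c : C) : Finset (G.edgeSet × C) :=
  {e ∈ edgesAt G v | 0 < μ e c}.biUnion (listCoins μ)

/-- The coins of the edge `e`, or those of a vertex and a colour. -/
noncomputable def eventCoins (μ : G.edgeSet → C → ℝ) : G.edgeSet ⊕ V × C → Finset (G.edgeSet × C) :=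
  Sum.elim (listCoins μ) fun z ↦ vertexCoins μ z.1 z.2

variable {μ : G.edgeSet → C → ℝ} {ω ω' : G.edgeSet × C → Bool} {e : G.edgeSet} {N : ℕ}

@[simp]
theorem mem_listCoins {z : G.edgeSet × C} :
    z ∈ listCoins μ e ↔ z.1 ∈ edgeNhd e ∧ 0 < μ z.1 z.2 ∧ 0 < μ e z.2 := by
  simp only [listCoins, mem_filter_univ]

theorem coloured_congr (h : ∀ z ∈ listCoins μ e, ω z = ω' z) :
    ω ∈ coloured μ e ↔ ω' ∈ coloured μ e := by
  simp only [coloured, Set.mem_iUnion]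
  exact exists_congr fun c ↦ mem_assigned_congr fun he f hf hf₀ ↦
    h (f, c) (mem_listCoins.2 ⟨hf, hf₀, he⟩)

theorem nibbleWeight_congr {θ : ℝ} {c : C} (he : 0 < μ e c) (h : ∀ z ∈ listCoins μ e, ω z = ω' z) :
    nibbleWeight θ μ ω e c = nibbleWeight θ μ ω' e c := by
  have hsurvived : ω ∈ survived μ e c ↔ ω' ∈ survived μ e c :=
    mem_avoid_activated_congr fun f hf hf₀ ↦ h (f, c) (mem_listCoins.2 ⟨hf, hf₀, he⟩)
  simp only [nibbleWeight, Set.mem_sdiff, hsurvived, coloured_congr h]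

section Card

variable (hlist : ∀ e, #{c | 0 < μ e c} ≤ N) (hedges : ∀ v c, #{e ∈ edgesAt G v | 0 < μ e c} ≤ N)

include hlist hedges

theorem card_listCoins_le (e : G.edgeSet) : #(listCoins μ e) ≤ 2 * N ^ 2 := by
  have hsub : listCoins μ e ⊆ ({c | 0 < μ e c} : Finset C).biUnion
      fun c ↦ {f ∈ edgeNhd e | 0 < μ f c} ×ˢ {c} := fun z hz ↦ by
    obtain ⟨hf, hf₀, he⟩ := mem_listCoins.1 hz
    exact mem_biUnion.2 ⟨z.2, by simpa using he, by simp [hf₀, -mem_edgeNhd, hf]⟩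
  calc #(listCoins μ e) ≤ #({c | 0 < μ e c} : Finset C) * (2 * N) :=
        (card_le_card hsub).trans (card_biUnion_le_card_mul _ _ _ fun c _ ↦ by
          rw [card_product, card_singleton, mul_one]
          exact card_edgeNhd_filter_le (hedges · c) e)
    _ ≤ N * (2 * N) := Nat.mul_le_mul_right _ (hlist e)
    _ = 2 * N ^ 2 := by ring

theorem card_vertexCoins_le (v : V) (c : C) : #(vertexCoins μ v c) ≤ 2 * N ^ 3 :=
  calc #(vertexCoins μ v c) ≤ #{e ∈ edgesAt G v | 0 < μ e c} * (2 * N ^ 2) :=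
        card_biUnion_le_card_mul _ _ _ fun e _ ↦ card_listCoins_le hlist hedges e
    _ ≤ N * (2 * N ^ 2) := Nat.mul_le_mul_right _ (hedges v c)
    _ = 2 * N ^ 3 := by ring

theorem card_eventCoins_le (hN : 1 ≤ N) (b : G.edgeSet ⊕ V × C) :
    #(eventCoins μ b) ≤ 2 * N ^ 3 := by
  rcases b with e | ⟨v, c⟩
  · exact (card_listCoins_le hlist hedges e).trans
      (Nat.mul_le_mul_left 2 (Nat.pow_le_pow_right hN (by norm_num)))
  · exact card_vertexCoins_le hlist hedges v c

omit hlist in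
theorem card_mem_listCoins_le (z : G.edgeSet × C) : #{e | z ∈ listCoins μ e} ≤ 2 * N := by
  refine (card_le_card fun e he ↦ ?_).trans (card_edgeNhd_filter_le (hedges · z.2) z.1)
  obtain ⟨hz, -, he⟩ := mem_listCoins.1 ((mem_filter_univ e).1 he)
  exact mem_filter.2 ⟨mem_edgeNhd_comm.1 hz, he⟩

variable [Fintype V]

theorem card_mem_vertexCoins_le (z : G.edgeSet × C) :
    #{b : V × C | z ∈ vertexCoins μ b.1 b.2} ≤ 4 * N ^ 2 := by
  have hsub : ({b | z ∈ vertexCoins μ b.1 b.2} : Finset (V × C)) ⊆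
      ({e | z ∈ listCoins μ e} : Finset G.edgeSet).biUnion
        fun e ↦ e.1.toFinset ×ˢ ({c | 0 < μ e c} : Finset C) := fun b hb ↦ by
    obtain ⟨e, he, hz⟩ := mem_biUnion.1 (mem_filter.1 hb).2
    obtain ⟨hv, he₀⟩ := mem_filter.1 he
    exact mem_biUnion.2 ⟨e, (mem_filter_univ e).2 hz, mem_product.2
      ⟨Sym2.mem_toFinset.2 (mem_edgesAt.1 hv), (mem_filter_univ b.2).2 he₀⟩⟩
  calc #{b : V × C | z ∈ vertexCoins μ b.1 b.2}
      ≤ #{e | z ∈ listCoins μ e} * (2 * N) :=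
        (card_le_card hsub).trans (card_biUnion_le_card_mul _ _ _ fun e _ ↦ by
          rw [card_product]
          exact Nat.mul_le_mul (Sym2.card_toFinset_of_not_isDiag _
            (G.not_isDiag_of_mem_edgeSet e.2)).le (hlist e))
    _ ≤ 2 * N * (2 * N) := Nat.mul_le_mul_right _ (card_mem_listCoins_le hedges z)
    _ = 4 * N ^ 2 := by ring

theorem card_mem_eventCoins_le (hN : 1 ≤ N) (z : G.edgeSet × C) :
    #{b | z ∈ eventCoins μ b} ≤ 6 * N ^ 2 :=
  calc #{b | z ∈ eventCoins μ b}
      = #{e | z ∈ listCoins μ e} + #{b : V × C | z ∈ vertexCoins μ b.1 b.2} := by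
        simp only [card_filter, Fintype.sum_sum_type]; rfl
    _ ≤ 2 * N + 4 * N ^ 2 :=
        add_le_add (card_mem_listCoins_le hedges z) (card_mem_vertexCoins_le hlist hedges z)
    _ ≤ 6 * N ^ 2 := by nlinarith

end Card

end Dependence

section Round

variable {V C : Type*} {G : SimpleGraph V} [Fintype G.edgeSet] {μ : G.edgeSet → C → ℝ}
  {θ K M d l η : ℝ} {N : ℕ} {ω : G.edgeSet × C → Bool} {e : G.edgeSet} {c : C}

theorem mem_of_nibbleWeight_pos (h : 0 < nibbleWeight θ μ ω e c) :
    ω ∈ survived μ e c \ coloured μ e := by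
  by_contra hω
  exact h.ne' (if_neg hω)

theorem pos_of_nibbleWeight_pos (hμ : ∀ e c, 0 ≤ μ e c) (h : 0 < nibbleWeight θ μ ω e c) :
    0 < μ e c := by
  refine (hμ e c).lt_of_ne' fun h₀ ↦ h.ne' ?_
  simp [nibbleWeight, scaledWeight, h₀]

/-- The edges with a colour of positive weight can be properly coloured with such colours. -/
def Colourable {C : Type*} (μ : G.edgeSet → C → ℝ) : Prop :=
  ∃ γ : (G.lineGraph.induce {e | ∃ c, 0 < μ e c}).Coloring C,
    ∀ e : {e | ∃ c, 0 < μ e c}, 0 < μ e (γ e)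

variable [Fintype C]

/-- The state of the nibble: all weights are at most `M`, every colour has total weight at most `d`
at each vertex, every nonempty list has total weight at least `l`, every list has at most `N`
colours and every colour occurs in the lists of at most `N` edges at each vertex. -/
structure NibbleState (μ : G.edgeSet → C → ℝ) (M d l : ℝ) (N : ℕ) : Prop where
  le (e : G.edgeSet) (c : C) : μ e c ≤ M
  degreeLE : DegreeLE μ d
  le_sum (e : G.edgeSet) (c : C) : 0 < μ e c → l ≤ ∑ c', μ e c'
  card_list_le (e : G.edgeSet) : #{c | 0 < μ e c} ≤ N
  card_edges_le (v : V) (c : C) : #{e ∈ edgesAt G v | 0 < μ e c} ≤ N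

/-- The bad events of a round: an edge that stays uncoloured loses too much of its list, or too much
weight of a colour remains at a vertex. -/
def badEvent (θ K d l η : ℝ) (μ : G.edgeSet → C → ℝ) :
    G.edgeSet ⊕ V × C → Set (G.edgeSet × C → Bool) :=
  Sum.elim
    (fun e ↦ {ω | (∃ c, 0 < μ e c) ∧ ω ∉ coloured μ e ∧ ∑ c, nibbleWeight θ μ ω e c ≤ l - η})
    fun z ↦ {ω | K * d + η ≤ ∑ e ∈ edgesAt G z.1, nibbleWeight θ μ ω e z.2}

theorem dependsOn_badEvent (hμ : ∀ e c, 0 ≤ μ e c) (b : G.edgeSet ⊕ V × C) :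
    DependsOn (· ∈ badEvent θ K d l η μ b) (eventCoins μ b) := fun ω ω' hω ↦ by
  have hweight (e : G.edgeSet) (c : C) (h : 0 < μ e c → ∀ z ∈ listCoins μ e, ω z = ω' z) :
      nibbleWeight θ μ ω e c = nibbleWeight θ μ ω' e c := by
    rcases (hμ e c).eq_or_lt with h₀ | h₀
    · simp [nibbleWeight, scaledWeight, ← h₀]
    · exact nibbleWeight_congr h₀ (h h₀)
  rcases b with e | ⟨v, c⟩
  · have hsum := sum_congr (rfl : univ = univ) fun c _ ↦ hweight e c fun _ ↦ hω
    simp only [badEvent, Sum.elim_inl, Set.mem_ofPred_eq, coloured_congr hω, hsum]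
  · have hsum := sum_congr (rfl : edgesAt G v = _) fun e he ↦ hweight e c fun h z hz ↦
      hω z (mem_biUnion.2 ⟨e, mem_filter.2 ⟨he, h⟩, hz⟩)
    simp only [badEvent, Sum.elim_inr, Set.mem_ofPred_eq, hsum]

theorem measureReal_badEvent_le (hμ : NibbleState μ M d l N) (hd : d ≤ 1) (hθ₀ : 0 ≤ θ)
    (hθ : θ ≤ 1 / 2) (hM₀ : 0 < M) (hM₁ : M ≤ 1) (hl : l ≤ 2) (hη₀ : 0 ≤ η) (hη₁ : η ≤ 1)
    (hK₀ : 0 ≤ K) (hK : Real.exp (-(θ * (1 - 2 * θ) * (l - M))) ≤ K * ((1 - θ) * (1 - θ * M)))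
    (b : G.edgeSet ⊕ V × C) :
    (Measure.pi (coin θ μ)).real (badEvent θ K d l η μ b) ≤ Real.exp (-(η ^ 2 / (256 * M))) := by
  rcases b with e | ⟨v, c⟩
  · by_cases he : ∃ c, 0 < μ e c
    · obtain ⟨c, hc⟩ := he
      refine (measureReal_mono fun ω hω ↦ ?_).trans (measureReal_sum_survived_le_le
        (hμ.degreeLE.mono hd) hθ₀ hθ hM₀ hμ.le hη₀ hη₁ (hμ.le_sum e c hc) hl)
      obtain ⟨-, hcol, hsum⟩ := hω
      simpa [nibbleWeight, hcol, sum_filter] using hsum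
    · simpa [badEvent, he] using (Real.exp_pos _).le
  · exact measureReal_le_sum_nibbleWeight_le hμ.degreeLE hd hθ₀ hθ hM₀ hM₁ hμ.le hη₀ hη₁ hK₀ hK
      hμ.le_sum v c

theorem exists_forall_notMem_badEvent [Finite V] (hμ : NibbleState μ M d l N) (hd : d ≤ 1)
    (hθ₀ : 0 ≤ θ) (hθ : θ ≤ 1 / 2) (hM₀ : 0 < M) (hM₁ : M ≤ 1) (hl : l ≤ 2) (hη₀ : 0 ≤ η)
    (hη₁ : η ≤ 1) (hK₀ : 0 ≤ K)
    (hK : Real.exp (-(θ * (1 - 2 * θ) * (l - M))) ≤ K * ((1 - θ) * (1 - θ * M)))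
    (hN : 1 ≤ N) (hNM : 48 * N ^ 5 * Real.exp (-(η ^ 2 / (256 * M))) ≤ 1) :
    ∃ ω, ∀ b, ω ∉ badEvent θ K d l η μ b := by
  cases nonempty_fintype V
  have hN₁ : (1 : ℝ) ≤ N ^ 5 := one_le_pow₀ (mod_cast hN)
  have hp := Real.exp_pos (-(η ^ 2 / (256 * M)))
  have hp₁ : Real.exp (-(η ^ 2 / (256 * M))) ≤ 1 / 4 := by nlinarith
  refine exists_forall_notMem_of_card_le (coin θ μ) (dependsOn_badEvent hμ.degreeLE.nonneg)
    (measureReal_badEvent_le hμ hd hθ₀ hθ hM₀ hM₁ hl hη₀ hη₁ hK₀ hK) hp₁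
    (card_eventCoins_le hμ.card_list_le hμ.card_edges_le hN) (fun z ↦ ?_) (k := 6 * N ^ 2) ?_
  · convert card_mem_eventCoins_le hμ.card_list_le hμ.card_edges_le hN z
  push_cast
  linarith [show (2 * (N : ℝ) ^ 3) * (6 * N ^ 2) * Real.exp (-(η ^ 2 / (256 * M))) =
    48 * N ^ 5 * Real.exp (-(η ^ 2 / (256 * M))) / 4 by ring]

theorem nibbleState_nibbleWeight (hμ : NibbleState μ M d l N) (hd : d ≤ 1)
    (hθ₀ : 0 ≤ θ) (hθ : θ ≤ 1 / 2) (hM₀ : 0 ≤ M) (hω : ∀ b, ω ∉ badEvent θ K d l η μ b) :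
    NibbleState (nibbleWeight θ μ ω) (4 * M) (K * d + η) (l - η) N := by
  have hμ₁ := hμ.degreeLE.mono hd
  have hpos {e : G.edgeSet} {c : C} (h : 0 < nibbleWeight θ μ ω e c) : 0 < μ e c :=
    pos_of_nibbleWeight_pos hμ₁.nonneg h
  refine ⟨fun e c ↦ ?_, ⟨fun e c ↦ ?_, fun v c ↦ ?_⟩, fun e c h ↦ ?_, fun e ↦ ?_, fun v c ↦ ?_⟩
  · unfold nibbleWeight
    split_ifs
    · linarith [scaledWeight_le_four_mul hμ₁ hθ₀ hθ e c, hμ.le e c]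
    · linarith
  · unfold nibbleWeight
    split_ifs
    exacts [scaledWeight_nonneg hμ₁ hθ₀ hθ e c, le_rfl]
  · exact (not_le.1 (hω (.inr (v, c)))).le
  · by_contra! hlt
    exact hω (.inl e) ⟨⟨c, hpos h⟩, (mem_of_nibbleWeight_pos h).2, hlt.le⟩
  · exact (card_le_card (monotone_filter_right _ fun c _ ↦ hpos)).trans (hμ.card_list_le e)
  · exact (card_le_card (monotone_filter_right _ fun e _ ↦ hpos)).trans (hμ.card_edges_le v c)

theorem Colourable.of_nibbleWeight (hμ : ∀ e c, 0 ≤ μ e c) (hηl : η ≤ l)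
    (hω : ∀ b, ω ∉ badEvent θ K d l η μ b) (h : Colourable (nibbleWeight θ μ ω)) :
    Colourable μ := by
  obtain ⟨γ, hγ⟩ := h
  have hlist (e : G.edgeSet) (he : ∃ c, 0 < μ e c) (hcol : ω ∉ coloured μ e) :
      ∃ c, 0 < nibbleWeight θ μ ω e c := by
    by_contra! hle
    exact hω (.inl e) ⟨he, hcol, (sum_nonpos fun c _ ↦ hle c).trans (sub_nonneg.2 hηl)⟩
  have hchoice (e : {e | ∃ c, 0 < μ e c}) : ∃ c, ω ∈ assigned μ e c ∨
      ∃ he : ∃ c, 0 < nibbleWeight θ μ ω e c, c = γ ⟨e, he⟩ := by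
    by_cases hcol : ω ∈ coloured μ e
    · obtain ⟨c, hc⟩ := Set.mem_iUnion.1 hcol
      exact ⟨c, .inl hc⟩
    · exact ⟨_, .inr ⟨hlist e e.2 hcol, rfl⟩⟩
  choose γ' hγ' using hchoice
  have hnhd {e f : G.edgeSet} (hadj : G.lineGraph.Adj e f) : f ∈ edgeNhd e :=
    mem_edgeNhd.2 (SimpleGraph.lineGraph_adj_iff_exists.1 hadj).2
  have hsurvived {e : G.edgeSet} (he : ∃ c, 0 < nibbleWeight θ μ ω e c) :
      ω ∈ survived μ e (γ ⟨e, he⟩) := (mem_of_nibbleWeight_pos (hγ ⟨e, he⟩)).1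
  refine ⟨.mk γ' fun {e f} hadj heq ↦ ?_, fun e ↦ ?_⟩
  · rw [SimpleGraph.comap_adj] at hadj
    rcases hγ' e with he | ⟨he, he'⟩ <;> rcases hγ' f with hf | ⟨hf, hf'⟩
    · exact notMem_activated_of_mem_assigned he (hnhd hadj) hadj.ne' (heq ▸ hf.1)
    · exact notMem_activated_of_mem_survived (hsurvived hf) (hnhd hadj.symm) (hf' ▸ heq ▸ he.1)
    · exact notMem_activated_of_mem_survived (hsurvived he) (hnhd hadj) (he' ▸ heq ▸ hf.1)
    · exact γ.valid (v := ⟨e, he⟩) (w := ⟨f, hf⟩) hadj (he' ▸ hf' ▸ heq)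
  · rcases hγ' e with h | ⟨he, h⟩
    · exact h.1.2
    · exact pos_of_nibbleWeight_pos hμ (h ▸ hγ ⟨e, he⟩)

end Round

section Iteration

variable {V C : Type*} [Finite V] {G : SimpleGraph V} [Fintype G.edgeSet] [Fintype C]
  {μ : G.edgeSet → C → ℝ} {M d l : ℝ} {N : ℕ}

omit [Finite V] in
theorem DegreeLE.colourable (hμ : DegreeLE μ (1 / 32))
    (hlist : ∀ e c, 0 < μ e c → 1 ≤ ∑ c', μ e c') : Colourable μ := by
  refine exists_coloring_of_sum_weight_le _ (fun e c ↦ hμ.nonneg e c)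
    (fun e ↦ e.2.elim (hlist e)) fun e c ↦ ?_
  calc ∑ f with (G.lineGraph.induce {e | ∃ c, 0 < μ e c}).Adj e f, μ f c
      = ∑ f ∈ ({f | (G.lineGraph.induce {e | ∃ c, 0 < μ e c}).Adj e f} : Finset _).map
          (.subtype _), μ f c := by rw [sum_map]; congr!
    _ ≤ ∑ f ∈ edgeNhd e.1, μ f c :=
        sum_le_sum_of_subset_of_nonneg (fun f hf ↦ by
          obtain ⟨g, hg, rfl⟩ := mem_map.1 hf
          exact mem_edgeNhd.2 (SimpleGraph.lineGraph_adj_iff_exists.1 (mem_filter.1 hg).2).2)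
          fun f _ _ ↦ hμ.nonneg f c
    _ ≤ 1 / 16 := (sum_edgeNhd_le (hμ.nonneg · c) (hμ.sum_le · c) e).trans (by norm_num)

theorem NibbleState.colourable_of_next {θ K η : ℝ} (hμ : NibbleState μ M d l N) (hd : d ≤ 1)
    (hθ₀ : 0 ≤ θ) (hθ : θ ≤ 1 / 2) (hM₀ : 0 < M) (hM₁ : M ≤ 1) (hl : l ≤ 2) (hηl : η ≤ l)
    (hη₀ : 0 ≤ η) (hη₁ : η ≤ 1) (hK₀ : 0 ≤ K)
    (hK : Real.exp (-(θ * (1 - 2 * θ) * (l - M))) ≤ K * ((1 - θ) * (1 - θ * M)))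
    (hN : 1 ≤ N) (hNM : 48 * N ^ 5 * Real.exp (-(η ^ 2 / (256 * M))) ≤ 1)
    (hnext : ∀ ν : G.edgeSet → C → ℝ,
      NibbleState ν (4 * M) (K * d + η) (l - η) N → Colourable ν) : Colourable μ := by
  obtain ⟨ω, hω⟩ :=
    exists_forall_notMem_badEvent hμ hd hθ₀ hθ hM₀ hM₁ hl hη₀ hη₁ hK₀ hK hN hNM
  exact .of_nibbleWeight hμ.degreeLE.nonneg hηl hω
    (hnext _ (nibbleState_nibbleWeight hμ hd hθ₀ hθ hM₀.le hω))

theorem exp_neg_add_sq_le_one_sub {x : ℝ} (hx : x ≤ 1 / 2) :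
    Real.exp (-(x + 2 * x ^ 2)) ≤ 1 - x := by
  rw [Real.exp_neg, inv_le_iff_one_le_mul₀ (Real.exp_pos _)]
  calc 1 ≤ (1 - x) * (x + 2 * x ^ 2 + 1) := by nlinarith [sq_nonneg x]
    _ ≤ (1 - x) * Real.exp (x + 2 * x ^ 2) :=
        mul_le_mul_of_nonneg_left (Real.add_one_le_exp _) (by linarith)

-- Of the two factors `exp (-(4 * θ ^ 2))`, one drives the decay of the degrees and the other
-- absorbs the error `η` of each round.
theorem exp_neg_survival_le {θ : ℝ} (hθ₀ : 0 ≤ θ) (hθ : θ ≤ 1 / 32) (hM₀ : 0 ≤ M)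
    (hM : M ≤ θ / 2) (hl : 1 + 16 * θ ≤ l) :
    Real.exp (-(θ * (1 - 2 * θ) * (l - M))) ≤
      Real.exp (-(4 * θ ^ 2)) ^ 2 * ((1 - θ) * (1 - θ * M)) := by
  have hθM : θ * M ≤ 1 / 2 := by nlinarith
  have hlist : 1 + 10 * θ + 2 * M ≤ (1 - 2 * θ) * (l - M) := by
    nlinarith [mul_le_mul_of_nonneg_left hl (by linarith : 0 ≤ 1 - 2 * θ)]
  calc Real.exp (-(θ * (1 - 2 * θ) * (l - M)))
      ≤ Real.exp (-(4 * θ ^ 2) * 2 + (-(θ + 2 * θ ^ 2) + -(θ * M + 2 * (θ * M) ^ 2))) := by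
        refine Real.exp_le_exp.2 ?_
        nlinarith [mul_le_mul_of_nonneg_left hlist hθ₀, mul_nonneg hθ₀ hM₀]
    _ = Real.exp (-(4 * θ ^ 2)) ^ 2 *
          (Real.exp (-(θ + 2 * θ ^ 2)) * Real.exp (-(θ * M + 2 * (θ * M) ^ 2))) := by
        rw [Real.exp_add, Real.exp_add, Real.exp_mul]
        norm_cast
    _ ≤ Real.exp (-(4 * θ ^ 2)) ^ 2 * ((1 - θ) * (1 - θ * M)) := by
        gcongr
        exacts [by linarith, exp_neg_add_sq_le_one_sub (by linarith),
          exp_neg_add_sq_le_one_sub hθM]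

theorem NibbleState.colourable {θ q η M₁ : ℝ} (hθ₀ : 0 < θ) (hθ : θ ≤ 1 / 32)
    (hq : q = Real.exp (-(4 * θ ^ 2))) (hη₀ : 0 ≤ η) (hη : η ≤ (q - q ^ 2) / 32)
    (hM₁ : M₁ ≤ θ / 2) (hN : 1 ≤ N) (hNM : 48 * N ^ 5 * Real.exp (-(η ^ 2 / (256 * M₁))) ≤ 1)
    {n : ℕ} (hμ : NibbleState μ M d l N) (hM₀ : 0 < M) (hM : 4 ^ n * M ≤ M₁) (hd : d ≤ 1)
    (hdn : q ^ n * d ≤ 1 / 32) (hl₁ : 1 + 16 * θ + n * η ≤ l) (hl : l ≤ 2) : Colourable μ := by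
  have hq₀ : 0 < q := hq ▸ Real.exp_pos _
  have hq₁ : q ≤ 1 := hq ▸ Real.exp_le_one_iff.2 (by nlinarith)
  have hsmall {μ : G.edgeSet → C → ℝ} {M d l : ℝ} (hμ : NibbleState μ M d l N)
      (hd : d ≤ 1 / 32) (hl : 1 ≤ l) : Colourable μ :=
    (hμ.degreeLE.mono hd).colourable fun e c h ↦ hl.trans (hμ.le_sum e c h)
  induction n generalizing μ M d l with
  | zero => exact hsmall hμ (by simpa using hdn) (by rw [Nat.cast_zero, zero_mul] at hl₁; linarith)
  | succ n ih =>
    have hnη : 0 ≤ n * η := by positivity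
    have hη₁ : η ≤ 1 := by nlinarith
    push_cast at hl₁
    rcases le_or_gt d (1 / 32) with hd' | hd'
    · exact hsmall hμ hd' (by linarith)
    have hMM₁ : M ≤ M₁ := by nlinarith [one_le_pow₀ (n := n + 1) (by norm_num : (1 : ℝ) ≤ 4)]
    have hexp : Real.exp (-(η ^ 2 / (256 * M))) ≤ Real.exp (-(η ^ 2 / (256 * M₁))) :=
      Real.exp_le_exp.2 (by gcongr)
    refine hμ.colourable_of_next hd hθ₀.le (by linarith) hM₀ (by linarith) hl (by linarith) hη₀
      hη₁ (K := q ^ 2) (by positivity)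
      (hq ▸ exp_neg_survival_le hθ₀.le hθ hM₀.le (by linarith) (by linarith)) hN
      ((mul_le_mul_of_nonneg_left hexp (by positivity)).trans hNM) fun ν hν ↦ ?_
    have hdq : q ^ 2 * d + η ≤ q * d := by nlinarith [mul_nonneg hq₀.le (sub_nonneg.2 hq₁)]
    have hdecay : q ^ n * (q ^ 2 * d + η) ≤ 1 / 32 :=
      (mul_le_mul_of_nonneg_left hdq (by positivity)).trans (by rwa [← mul_assoc, ← pow_succ])
    exact ih hν (by positivity) (by rwa [← mul_assoc, ← pow_succ])
      (hdq.trans (by nlinarith)) hdecay (by linarith) (by linarith)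

end Iteration

section SparseWeights

variable {V C : Type*} {G : SimpleGraph V} [Fintype G.edgeSet] [Fintype C]
  {μ : G.edgeSet → C → ℝ}

theorem card_pos_le_of_sum_le {ι : Type*} {s : Finset ι} {f : ι → ℝ} {x S : ℝ} {N : ℕ}
    (hx : 0 < x) (hf : ∀ i ∈ s, 0 ≤ f i) (hfx : ∀ i ∈ s, 0 < f i → x ≤ f i)
    (hS : ∑ i ∈ s, f i ≤ S) (hN : S ≤ N * x) : #{i ∈ s | 0 < f i} ≤ N := by
  have hsum : #{i ∈ s | 0 < f i} * x ≤ ∑ i ∈ s, f i :=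
    calc #{i ∈ s | 0 < f i} * x = ∑ _i ∈ s with 0 < f _i, x := by rw [sum_const, nsmul_eq_mul]
      _ ≤ ∑ i ∈ s with 0 < f i, f i :=
          sum_le_sum fun i hi ↦ hfx i (mem_filter.1 hi).1 (mem_filter.1 hi).2
      _ ≤ ∑ i ∈ s, f i :=
          sum_le_sum_of_subset_of_nonneg (filter_subset _ _) fun i hi _ ↦ hf i hi
  exact_mod_cast le_of_mul_le_mul_right (hsum.trans (hS.trans hN)) hx

theorem DegreeLE.nibbleState {x M l : ℝ} {N : ℕ} (hμ : DegreeLE μ 1) (hx : 0 < x)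
    (hμx : ∀ e c, 0 < μ e c → x ≤ μ e c) (hM : ∀ e c, μ e c ≤ M) (hl : ∀ e, l ≤ ∑ c, μ e c)
    (hsum : ∀ e, ∑ c, μ e c ≤ 3) (hN : 3 ≤ N * x) : NibbleState μ M 1 l N where
  le := hM
  degreeLE := hμ
  le_sum e _ _ := hl e
  card_list_le e :=
    card_pos_le_of_sum_le hx (fun c _ ↦ hμ.nonneg e c) (fun c _ ↦ hμx e c) (hsum e) hN
  card_edges_le v c :=
    card_pos_le_of_sum_le hx (fun e _ ↦ hμ.nonneg e c) (fun e _ ↦ hμx e c) (hμ.sum_le v c)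
      (by linarith)

end SparseWeights

section Parameters

theorem exists_rounds_and_error {θ q : ℝ} (hθ : 0 < θ) (hq₀ : 0 < q) (hq₁ : q < 1) :
    ∃ (n : ℕ) (η : ℝ), q ^ n ≤ 1 / 32 ∧ 0 < η ∧ η ≤ (q - q ^ 2) / 32 ∧ n * η ≤ θ := by
  obtain ⟨n, hn⟩ := exists_pow_lt_of_lt_one (by norm_num : (0 : ℝ) < 1 / 32) hq₁
  have hq : 0 < (q - q ^ 2) / 32 := by nlinarith
  refine ⟨n, min ((q - q ^ 2) / 32) (θ / (n + 1)), hn.le, lt_min hq (by positivity),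
    min_le_left _ _, ?_⟩
  calc n * min ((q - q ^ 2) / 32) (θ / (n + 1)) ≤ (n + 1) * (θ / (n + 1)) :=
        mul_le_mul (by linarith) (min_le_right _ _) (le_min hq.le (by positivity)) (by positivity)
    _ = θ := by field_simp

theorem ceil_pow_mul_exp_neg_le_one {t : ℝ} (ht : 48 * 4 ^ 5 ≤ t) :
    48 * (⌈3 * Real.exp t⌉₊ : ℝ) ^ 5 * Real.exp (-(6 * t)) ≤ 1 := by
  have hceil : (⌈3 * Real.exp t⌉₊ : ℝ) ≤ 4 * Real.exp t := by
    linarith [Nat.ceil_lt_add_one (by positivity : 0 ≤ 3 * Real.exp t),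
      Real.one_le_exp (by linarith : 0 ≤ t)]
  calc 48 * (⌈3 * Real.exp t⌉₊ : ℝ) ^ 5 * Real.exp (-(6 * t))
      ≤ 48 * (4 * Real.exp t) ^ 5 * Real.exp (-(6 * t)) := by gcongr
    _ = 48 * 4 ^ 5 * (Real.exp t ^ 5 * Real.exp (-(6 * t))) := by ring
    _ = 48 * 4 ^ 5 * Real.exp (-t) := by
        rw [← Real.exp_nat_mul, ← Real.exp_add]
        ring_nf
    _ ≤ Real.exp t * Real.exp (-t) := by
        gcongr
        linarith [Real.add_one_le_exp t]
    _ = 1 := by rw [← Real.exp_add, add_neg_cancel, Real.exp_zero]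

theorem exists_forall_colourable {θ : ℝ} (hθ₀ : 0 < θ) (hθ : θ ≤ 1 / 32) :
    ∃ a > 0, ∃ δ₀, ∀ δ ≥ δ₀, ∀ {V C : Type*} [Finite V] [Fintype C] {G : SimpleGraph V}
      [Fintype G.edgeSet] {μ : G.edgeSet → C → ℝ}, DegreeLE μ 1 →
      (∀ e c, 0 < μ e c → μ e c ∈ Set.Icc (Real.exp (-(a * δ))) δ⁻¹) →
      (∀ e, ∑ c, μ e c ∈ Set.Icc (1 + 32 * θ) 3) → Colourable μ := by
  obtain ⟨n, η, hn, hη₀, hη, hnη⟩ := exists_rounds_and_error (θ := 16 * θ) (by positivity)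
    (Real.exp_pos (-(4 * θ ^ 2))) (Real.exp_lt_one_iff.2 (neg_lt_zero.2 (by positivity)))
  have ha : 0 < η ^ 2 / (6 * 256 * 4 ^ n) := by positivity
  set a := η ^ 2 / (6 * 256 * 4 ^ n) with ha'
  refine ⟨a, ha, max (48 * 4 ^ 5 / a) (4 ^ n * 2 / θ),
    fun δ hδ V C _ _ G _ μ hμ hweight hsum ↦ ?_⟩
  obtain ⟨hδa, hδθ⟩ := max_le_iff.1 hδ
  have hδ₀ : 0 < δ := (by positivity : 0 < 4 ^ n * 2 / θ).trans_le hδθ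
  have hexponent : η ^ 2 / (256 * (4 ^ n * δ⁻¹)) = 6 * (a * δ) := by
    rw [ha']
    field_simp
  have hM : 4 ^ n * δ⁻¹ ≤ θ / 2 := by
    rw [← div_eq_mul_inv, div_le_iff₀ hδ₀]
    linarith [(div_le_iff₀ hθ₀).1 hδθ]
  have hceil : 3 ≤ (⌈3 * Real.exp (a * δ)⌉₊ : ℝ) * Real.exp (-(a * δ)) := by
    rw [Real.exp_neg, ← div_eq_mul_inv, le_div_iff₀ (Real.exp_pos _)]
    exact Nat.le_ceil _
  have hle (e : G.edgeSet) (c : C) : μ e c ≤ δ⁻¹ :=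
    not_lt.1 fun h ↦ h.not_ge (hweight e c ((inv_pos.2 hδ₀).trans h)).2
  have hstate := hμ.nibbleState (Real.exp_pos _) (fun e c h ↦ (hweight e c h).1) hle
    (fun e ↦ (hsum e).1) (fun e ↦ (hsum e).2) hceil
  exact hstate.colourable hθ₀ hθ rfl hη₀.le hη hM (Nat.one_le_ceil_iff.2 (by positivity))
    (hexponent ▸ ceil_pow_mul_exp_neg_le_one ((div_le_iff₀' ha).1 hδa))
    (inv_pos.2 hδ₀) le_rfl le_rfl (by linarith) (by linarith) (by linarith)

end Parameters

section Lists

theorem exists_subset_sum_mem_Icc {ι : Type*} {s : Finset ι} {f : ι → ℝ} {a m : ℝ} (ha : 0 < a)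
    (hf : ∀ i ∈ s, f i ≤ m) (hs : a ≤ ∑ i ∈ s, f i) :
    ∃ t ⊆ s, ∑ i ∈ t, f i ∈ Set.Icc a (a + m) := by
  induction s using Finset.induction_on with
  | empty => exact absurd hs (by simpa using ha)
  | insert i s hi ih =>
    by_cases hs' : a ≤ ∑ j ∈ s, f j
    · obtain ⟨t, hts, ht⟩ := ih (fun j hj ↦ hf j (mem_insert_of_mem hj)) hs'
      exact ⟨t, hts.trans (subset_insert _ _), ht⟩
    · refine ⟨_, subset_rfl, hs, ?_⟩
      rw [sum_insert hi]
      linarith [hf i (mem_insert_self _ _)]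

variable {V : Type} {G : SimpleGraph V}

/-- The weights `μ` on the lists `T`, as a function on a finite set `S` of colours that contains all
lists; colours outside the list of an edge get weight `0`. -/
noncomputable def listWeight (S : Finset ℕ) (T : G.edgeSet → Finset ℕ) (μ : Sym2 V → ℕ → ℝ)
    (e : G.edgeSet) (c : S) : ℝ :=
  if (c : ℕ) ∈ T e then μ e c else 0

variable {S : Finset ℕ} {T : G.edgeSet → Finset ℕ} {L : Sym2 V → Finset ℕ} {μ : Sym2 V → ℕ → ℝ}

theorem mem_of_listWeight_pos {e : G.edgeSet} {c : S} (h : 0 < listWeight S T μ e c) :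
    (c : ℕ) ∈ T e := by
  by_contra hc
  exact h.ne' (if_neg hc)

theorem listWeight_of_mem {e : G.edgeSet} {c : S} (h : (c : ℕ) ∈ T e) :
    listWeight S T μ e c = μ e c :=
  if_pos h

theorem sum_listWeight {e : G.edgeSet} (hT : T e ⊆ S) :
    ∑ c, listWeight S T μ e c = ∑ c ∈ T e, μ e c := by
  simp only [listWeight]
  rw [sum_coe_sort S fun c ↦ if c ∈ T e then μ e c else 0, sum_ite_mem, inter_eq_right.2 hT]

theorem degreeLE_listWeight [Fintype G.edgeSet] (hT : ∀ e, T e ⊆ L e)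
    (hμ : ∀ e ∈ G.edgeSet, ∀ c ∈ L e, 0 ≤ μ e c)
    (hdeg : ∀ v c, ∑ e ∈ G.edgeFinset with v ∈ e ∧ c ∈ L e, μ e c ≤ 1) :
    DegreeLE (listWeight S T μ) 1 where
  nonneg e c := by
    unfold listWeight
    split_ifs with hc
    exacts [hμ e e.2 c (hT e hc), le_rfl]
  sum_le v c := by
    refine le_trans ?_ (hdeg v c)
    calc ∑ e ∈ edgesAt G v, listWeight S T μ e c
        = ∑ e ∈ edgesAt G v with (c : ℕ) ∈ T e, μ e c := by simp only [listWeight, sum_filter]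
      _ = ∑ e ∈ {e ∈ edgesAt G v | (c : ℕ) ∈ T e}.map (.subtype _), μ e c := by rw [sum_map]; rfl
      _ ≤ ∑ e ∈ G.edgeFinset with v ∈ e ∧ (c : ℕ) ∈ L e, μ e c := by
        refine sum_le_sum_of_subset_of_nonneg (fun e he ↦ ?_) fun e he _ ↦ ?_
        · obtain ⟨f, hf, rfl⟩ := mem_map.1 he
          obtain ⟨hfv, hfc⟩ := mem_filter.1 hf
          exact mem_filter.2
            ⟨SimpleGraph.mem_edgeFinset.2 f.2, mem_edgesAt.1 hfv, hT f hfc⟩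
        · obtain ⟨heG, -, hec⟩ := mem_filter.1 he
          exact hμ e (SimpleGraph.mem_edgeFinset.1 heG) c hec

theorem Colourable.exists_isLEdgeColouring {ν : G.edgeSet → S → ℝ} (h : Colourable ν)
    (hpos : ∀ e, ∃ c, 0 < ν e c) (hL : ∀ e c, 0 < ν e c → (c : ℕ) ∈ L e) :
    ∃ γ, IsLEdgeColouring G L γ := by
  obtain ⟨γ, hγ⟩ := h
  have hext (e : G.edgeSet) :
      Function.extend Subtype.val (fun e ↦ (γ ⟨e, hpos e⟩ : ℕ)) 0 e.1 = γ ⟨e, hpos e⟩ :=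
    Subtype.val_injective.extend_apply _ _ e
  refine ⟨Function.extend Subtype.val (fun e ↦ (γ ⟨e, hpos e⟩ : ℕ)) 0, fun e he ↦ ?_,
    fun e he f hf hef hv ↦ ?_⟩
  · rw [hext ⟨e, he⟩]
    exact hL _ _ (hγ ⟨⟨e, he⟩, hpos _⟩)
  · rw [hext ⟨e, he⟩, hext ⟨f, hf⟩, Subtype.coe_ne_coe]
    exact γ.valid
      (SimpleGraph.lineGraph_adj_iff_exists.2 ⟨fun h ↦ hef (congrArg Subtype.val h), hv⟩)

theorem exists_isLEdgeColouring_of_forall_colourable [Fintype G.edgeSet] {x y l : ℝ} (hx : 0 ≤ x)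
    (hl : 0 < l)
    (hcolourable : ∀ {C : Type} [Fintype C] {ν : G.edgeSet → C → ℝ}, DegreeLE ν 1 →
      (∀ e c, 0 < ν e c → ν e c ∈ Set.Icc x y) → (∀ e, ∑ c, ν e c ∈ Set.Icc l (l + y)) →
      Colourable ν)
    (hμ : ∀ e ∈ G.edgeSet, ∀ c ∈ L e, μ e c ∈ Set.Icc x y)
    (hlist : ∀ e ∈ G.edgeSet, l ≤ ∑ c ∈ L e, μ e c)
    (hdeg : ∀ v c, ∑ e ∈ G.edgeFinset with v ∈ e ∧ c ∈ L e, μ e c ≤ 1) :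
    ∃ γ, IsLEdgeColouring G L γ := by
  have htrunc (e : G.edgeSet) : ∃ T ⊆ L e, ∑ c ∈ T, μ e c ∈ Set.Icc l (l + y) :=
    exists_subset_sum_mem_Icc hl (fun c hc ↦ (hμ e e.2 c hc).2) (hlist e e.2)
  choose T hTL hTsum using htrunc
  set S := univ.biUnion T
  have hsum (e : G.edgeSet) : ∑ c, listWeight S T μ e c ∈ Set.Icc l (l + y) :=
    sum_listWeight (subset_biUnion_of_mem T (mem_univ e)) ▸ hTsum e
  have hmem (e : G.edgeSet) (c : S) (h : 0 < listWeight S T μ e c) : (c : ℕ) ∈ L e :=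
    hTL e (mem_of_listWeight_pos h)
  have hdegree : DegreeLE (listWeight S T μ) 1 :=
    degreeLE_listWeight hTL (fun e he c hc ↦ hx.trans (hμ e he c hc).1) hdeg
  have hcol : Colourable (listWeight S T μ) := hcolourable hdegree (fun e c h ↦ by
    rw [listWeight_of_mem (mem_of_listWeight_pos h)]
    exact hμ e e.2 c (hmem e c h)) hsum
  refine hcol.exists_isLEdgeColouring (fun e ↦ ?_) hmem
  by_contra! h
  exact (hl.trans_le (hsum e).1).not_ge (sum_nonpos fun c _ ↦ h c)

end Lists

theorem exists_forall_rpow_le_mul {a s : ℝ} (ha : 0 < a) (hs : s < 1) :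
    ∃ δ₀ : ℝ, ∀ δ ≥ δ₀, δ ^ s ≤ a * δ := by
  obtain ⟨δ₀, hδ₀⟩ := Filter.eventually_atTop.1
    ((tendsto_rpow_atTop (sub_pos.2 hs)).eventually_ge_atTop a⁻¹)
  refine ⟨max δ₀ 1, fun δ hδ ↦ ?_⟩
  obtain ⟨hδ₀', hδ₁⟩ := max_le_iff.1 hδ
  have hδ : 0 < δ := by linarith
  calc δ ^ s = a * a⁻¹ * δ ^ s := by rw [mul_inv_cancel₀ ha.ne', one_mul]
    _ ≤ a * δ ^ (1 - s) * δ ^ s := by gcongr; exact hδ₀ δ hδ₀'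
    _ = a * δ := by rw [mul_assoc, ← Real.rpow_add hδ, sub_add_cancel, Real.rpow_one]

end EdgeNibble

open EdgeNibble in
theorem stmt_1_general :
    ∀ ε : ℝ, 0 < ε →
    ∃ a > 0, ∃ δ₀ : ℝ, ∀ δ : ℝ, δ₀ ≤ δ →
    ∀ (V : Type) [Fintype V] [DecidableEq V]
      (G : SimpleGraph V) [DecidableRel G.Adj]
      (L : Sym2 V → Finset ℕ) (μ : Sym2 V → ℕ → ℝ),
      (∀ e ∈ G.edgeSet, ∀ c ∈ L e, Real.exp (-(a * δ)) ≤ μ e c ∧ μ e c ≤ δ⁻¹) →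
      (∀ e ∈ G.edgeSet, 1 + ε ≤ ∑ c ∈ L e, μ e c) →
      (∀ v : V, ∀ c : ℕ,
        ∑ e ∈ G.edgeFinset.filter (fun e => v ∈ e ∧ c ∈ L e), μ e c ≤ 1) →
      ∃ γ : Sym2 V → ℕ, IsLEdgeColouring G L γ := by
  intro ε hε
  set θ := min (ε / 32) (1 / 32)
  have hθ₀ : 0 < θ := lt_min (by positivity) (by norm_num)
  have hθ : θ ≤ 1 / 32 := min_le_right _ _
  have hθε : 32 * θ ≤ ε := by linarith [min_le_left (ε / 32) (1 / 32)]
  obtain ⟨a, ha, δ₀, hδ₀⟩ := exists_forall_colourable.{0, 0} hθ₀ hθ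
  refine ⟨a, ha, max δ₀ 1, fun δ hδ V _ _ G _ L μ hweight hlist hdeg ↦ ?_⟩
  have hδ₁ : δ⁻¹ ≤ 1 := inv_le_one_of_one_le₀ ((le_max_right _ _).trans hδ)
  refine exists_isLEdgeColouring_of_forall_colourable (Real.exp_pos _).le
    (by positivity : 0 < 1 + 32 * θ) (fun hν hνweight hνsum ↦ ?_) hweight
    (fun e he ↦ (by linarith : 1 + 32 * θ ≤ 1 + ε).trans (hlist e he))
    (fun v c ↦ by convert hdeg v c)
  exact hδ₀ δ ((le_max_left _ _).trans hδ) hν hνweight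
    fun e ↦ ⟨(hνsum e).1, (hνsum e).2.trans (by linarith)⟩

theorem stmt_1 :
    ∀ ε : ℝ, 0 < ε →
    ∃ δ₀ : ℝ, ∀ δ : ℝ, δ₀ ≤ δ →
    ∀ (V : Type) [Fintype V] [DecidableEq V]
      (G : SimpleGraph V) [DecidableRel G.Adj]
      (L : Sym2 V → Finset ℕ) (μ : Sym2 V → ℕ → ℝ),
      -- (L, μ) is an assignment of weighted lists: weights lie in (0,1]
      (∀ e ∈ G.edgeSet, ∀ c ∈ L e, 0 < μ e c ∧ μ e c ≤ 1) →
      -- (a)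
      (∀ e ∈ G.edgeSet, ∀ c ∈ L e,
        Real.exp (-(δ ^ ((1 : ℝ) / 25))) ≤ μ e c ∧ μ e c ≤ δ⁻¹) →
      -- (b)
      (∀ e ∈ G.edgeSet, 1 + ε ≤ ∑ c ∈ L e, μ e c) →
      -- (c)
      (∀ v : V, ∀ c : ℕ,
        ∑ e ∈ G.edgeFinset.filter (fun e => v ∈ e ∧ c ∈ L e), μ e c ≤ 1) →
      ∃ γ : Sym2 V → ℕ, IsLEdgeColouring G L γ := by
  intro ε hε
  obtain ⟨a, ha, δ₁, hδ₁⟩ := stmt_1_general ε hε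
  obtain ⟨δ₂, hδ₂⟩ := EdgeNibble.exists_forall_rpow_le_mul ha (by norm_num : (1 : ℝ) / 25 < 1)
  refine ⟨max δ₁ δ₂, fun δ hδ V _ _ G _ L μ _ hweight ↦
    hδ₁ δ ((le_max_left _ _).trans hδ) V G L μ fun e he c hc ↦ ⟨?_, (hweight e he c hc).2⟩⟩
  exact (Real.exp_le_exp.2 (neg_le_neg (hδ₂ δ ((le_max_right _ _).trans hδ)))).trans
    (hweight e he c hc).1
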